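/- Let K ≥ 1 and η ∈ (0, 1/2] be real numbers, let p and d be positive integers with d ≥ 3, and let Λ ⊆ F_2^n belong to the family 𝚲(2dp). Let Q ⊆ d·̇Λ with |Λ| ≥ 8d², assume p ≥ 2^{50+8d} K^d/η and T_p(Q) ≥ p^{dp}|Q|^p/K^{(d−1)p}. Set M = 2^{13}(8K)^{d−1}. Suppose p ≤ log|Λ|/log log|Λ| and |Q| ≥ 2^{60+50d+2/η} M^{17} K^{2d} p³ d^{−d} |Λ|^{d−1} · max{ (2^{30} M^{11} p)^{ηp} |Λ|^η log|Λ| , exp( log(2^{30} M^{20}) · log((p log M)/log p) / log(2^{−25} η p/M) ) }. Then there exist sets 𝓛, 𝓛' ⊆ Λ and elements λ_1, …, λ_{d−2} ∈ Λ such that 𝓛 ∩ 𝓛' = ∅, λ_i ∉ 𝓛 ∪ 𝓛' for each i, |𝓛| ≥ log( |Q| d^d / (2^{140+80d} K^{3d} |Λ|^{d−1}) ) / (2^{10} log(2^{40} 8^d K^d)), |𝓛'| ≥ (1/(2^{10} p²)) · ( |Q| d^d / (2^{140+80d} K^{3d} |Λ|^{d−1}) )^η, and λ_1 + ⋯ +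 λ_{d−2} + 𝓛 + 𝓛' ⊆ Q. Here log denotes the logarithm to base 2. -/

import Mathlib

open Finset Pointwise

/-- `T_k(A)`: the number of `2k`-tuples `(a_1,…,a_k,a'_1,…,a'_k) ∈ A^{2k}` with
`a_1+⋯+a_k = a'_1+⋯+a'_k`. -/
def addEnergy {G : Type*} [AddCommGroup G] [DecidableEq G] (k : ℕ) (A : Finset G) : ℕ :=
  (((Fintype.piFinset fun _ : Fin k => A) ×ˢ (Fintype.piFinset fun _ : Fin k => A)).filter
    fun v => ∑ i, v.1 i = ∑ i, v.2 i).card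

/-- `Λ` belongs to the family `𝚲(m)`: no nonempty subset of `Λ` of size at most `m`
has zero sum. -/
def InLambdaFamily {G : Type*} [AddCommGroup G] (m : ℕ) (Λ : Finset G) : Prop :=
  ∀ S ⊆ Λ, S.Nonempty → S.card ≤ m → ∑ x ∈ S, x ≠ 0

/-- `d ·̇ Λ`: the set of all sums of `d` pairwise distinct elements of `Λ`. -/
def dDot {G : Type*} [AddCommGroup G] [DecidableEq G] (d : ℕ) (Λ : Finset G) : Finset G :=
  (Λ.powersetCard d).image fun S => ∑ x ∈ S, x

/-!
Identify `Q` with a `d`-uniform hypergraph on `Λ`. Since `Λ` is dissociated, `T_p(Q)` is at most the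
`2p`-th moment of the Rademacher chaos `∑_{e ∈ Q} ∏_{v ∈ e} ε_v`. If no `d - 2` vertices had a large
biclique in their common link, removing vertices one at a time with a two-point moment inequality
would reduce this moment to those of graphs without a large biclique. In such a graph few pairs of
vertices have many common neighbours, so the bipartite adjacency matrix of a cut has small operator
norm, and decoupling followed by Khinchine's inequality shows that the moments of the quadratic
chaos are small. The resulting bound on `T_p(Q)` contradicts the assumed lower bound.
-/

open scoped BigOperators symmDiff

section SignAverages

variable {α : Type*} [DecidableEq α]

/-- The sign vector with `-1` exactly on `S`. Averaging over `S ∈ V.powerset` is taking the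
expectation over independent Rademacher signs indexed by `V`. -/
def rademacher (S : Finset α) (v : α) : ℝ := if v ∈ S then -1 else 1

lemma rademacher_of_mem {S : Finset α} {v : α} (h : v ∈ S) : rademacher S v = -1 := if_pos h

lemma rademacher_of_notMem {S : Finset α} {v : α} (h : v ∉ S) : rademacher S v = 1 := if_neg h

lemma rademacher_sq (S : Finset α) (v : α) : rademacher S v ^ 2 = 1 := by
  unfold rademacher; split_ifs <;> norm_num

lemma rademacher_congr {S T : Finset α} {v : α} (h : v ∈ S ↔ v ∈ T) :
    rademacher S v = rademacher T v := by
  simp only [rademacher, h]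

lemma rademacher_insert_of_ne (S : Finset α) {v w : α} (h : w ≠ v) :
    rademacher (insert v S) w = rademacher S w :=
  rademacher_congr (by simp [h])

lemma rademacher_symmDiff_self (S : Finset α) (v : α) :
    rademacher (S ∆ {v}) v = -rademacher S v := by
  by_cases h : v ∈ S <;> simp [rademacher, mem_symmDiff, h]

lemma rademacher_symmDiff_of_ne (S : Finset α) {v w : α} (h : w ≠ v) :
    rademacher (S ∆ {v}) w = rademacher S w :=
  rademacher_congr (by simp [mem_symmDiff, h])

omit [DecidableEq α] in
lemma expect_powerset_const (V : Finset α) (c : ℝ) : 𝔼 _S ∈ V.powerset, c = c :=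
  expect_const (powerset_nonempty V) c

lemma expect_powerset_insert {V : Finset α} {v : α} (hv : v ∉ V) (f : Finset α → ℝ) :
    𝔼 S ∈ (insert v V).powerset, f S = 𝔼 S ∈ V.powerset, (f S + f (insert v S)) / 2 := by
  simp only [expect_eq_sum_div_card, sum_powerset_insert hv, ← sum_div, sum_add_distrib,
    card_powerset, card_insert_of_notMem hv, pow_succ]
  push_cast
  field_simp

lemma expect_powerset_union {U W : Finset α} (h : Disjoint U W) (f : Finset α → ℝ) :
    𝔼 S ∈ (U ∪ W).powerset, f S = 𝔼 S ∈ U.powerset, 𝔼 S' ∈ W.powerset, f (S ∪ S') := by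
  induction U using Finset.induction_on generalizing f with
  | empty => simp
  | insert v U hv ih =>
    rw [disjoint_insert_left] at h
    rw [insert_union, expect_powerset_insert (by simp [hv, h.1]), expect_powerset_insert hv, ih h.2]
    simp only [insert_union, expect_add_distrib, ← expect_div]

lemma expect_powerset_symmDiff {V : Finset α} {v : α} (hv : v ∈ V) (f : Finset α → ℝ) :
    𝔼 S ∈ V.powerset, f (S ∆ {v}) = 𝔼 S ∈ V.powerset, f S := by
  have hmem : ∀ S ∈ V.powerset, S ∆ {v} ∈ V.powerset := fun S hS =>
    mem_powerset.2 <| symmDiff_le_sup.trans <|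
      union_subset (mem_powerset.1 hS) (singleton_subset_iff.2 hv)
  exact expect_nbij' (· ∆ {v}) (· ∆ {v}) hmem hmem (fun S _ => symmDiff_symmDiff_cancel_right _ _)
    (fun S _ => symmDiff_symmDiff_cancel_right _ _) fun S _ => rfl

lemma expect_powerset_le_of_add_symmDiff_le {V : Finset α} {v : α} (hv : v ∈ V)
    {f g : Finset α → ℝ} (h : ∀ S, f S + f (S ∆ {v}) ≤ g S + g (S ∆ {v})) :
    𝔼 S ∈ V.powerset, f S ≤ 𝔼 S ∈ V.powerset, g S := by
  have hsum := expect_le_expect (s := V.powerset) fun S _ => h S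
  rw [expect_add_distrib, expect_add_distrib, expect_powerset_symmDiff hv,
    expect_powerset_symmDiff hv] at hsum
  linarith

lemma expect_prod_rademacher_pow (V : Finset α) (m : α → ℕ) :
    𝔼 S ∈ V.powerset, ∏ v ∈ V, rademacher S v ^ m v = ∏ v ∈ V, ((-1) ^ m v + 1) / 2 := by
  rw [expect_eq_sum_div_card, prod_div_distrib, prod_const, card_powerset, Nat.cast_pow,
    Nat.cast_ofNat, prod_add]
  congr 1
  refine sum_congr rfl fun S hS => ?_
  rw [← prod_sdiff (mem_powerset.1 hS), mul_comm]
  congr 1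
  · exact prod_congr rfl fun v hv => by rw [rademacher_of_mem hv]
  · exact prod_congr rfl fun v hv => by rw [rademacher_of_notMem (mem_sdiff.1 hv).2, one_pow]

lemma expect_prod_rademacher_pow_nonneg (V : Finset α) (m : α → ℕ) :
    0 ≤ 𝔼 S ∈ V.powerset, ∏ v ∈ V, rademacher S v ^ m v := by
  rw [expect_prod_rademacher_pow]
  refine prod_nonneg fun v _ => ?_
  rcases neg_one_pow_eq_or ℝ (m v) with h | h <;> rw [h] <;> norm_num

lemma expect_prod_rademacher_pow_eq_one {V : Finset α} {m : α → ℕ} (hm : ∀ v ∈ V, Even (m v)) :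
    𝔼 S ∈ V.powerset, ∏ v ∈ V, rademacher S v ^ m v = 1 := by
  rw [expect_prod_rademacher_pow]
  exact prod_eq_one fun v hv => by rw [(hm v hv).neg_one_pow]; norm_num

lemma expect_prod_rademacher_eq_zero {V e : Finset α} (he : e ⊆ V) (hne : e.Nonempty) :
    𝔼 S ∈ V.powerset, ∏ v ∈ e, rademacher S v = 0 := by
  obtain ⟨v, hv⟩ := hne
  have hpow : ∀ S, ∏ v ∈ e, rademacher S v = ∏ v ∈ V, rademacher S v ^ (if v ∈ e then 1 else 0) :=
    fun S => by simp [pow_ite, prod_ite_mem, inter_eq_right.2 he]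
  simp only [hpow]
  rw [expect_prod_rademacher_pow]
  exact prod_eq_zero (he hv) (by simp [hv])

end SignAverages

section Moments

lemma sum_add_pow_le {ι : Type*} {s : Finset ι} {p : ℕ} (hp : p ≠ 0) {f g : ι → ℝ} {A B : ℝ}
    (hf : ∀ i ∈ s, 0 ≤ f i) (hg : ∀ i ∈ s, 0 ≤ g i) (hA : 0 ≤ A) (hB : 0 ≤ B)
    (hfA : ∑ i ∈ s, f i ^ p ≤ A ^ p) (hgB : ∑ i ∈ s, g i ^ p ≤ B ^ p) :
    ∑ i ∈ s, (f i + g i) ^ p ≤ (A + B) ^ p := by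
  have hp0 : (0 : ℝ) < p := by exact_mod_cast hp.bot_lt
  have hp1 : (1 : ℝ) ≤ p := by exact_mod_cast Nat.one_le_iff_ne_zero.2 hp
  have hmink := Real.Lp_add_le_of_nonneg s hp1 hf hg
  simp only [Real.rpow_natCast, one_div] at hmink
  have hroot {h : ι → ℝ} {C : ℝ} (hh : ∀ i ∈ s, 0 ≤ h i) (hC : 0 ≤ C) :
      (∑ i ∈ s, h i ^ p) ^ (p : ℝ)⁻¹ ≤ C ↔ ∑ i ∈ s, h i ^ p ≤ C ^ p := by
    rw [Real.rpow_inv_le_iff_of_pos (sum_nonneg fun i hi => pow_nonneg (hh i hi) p) hC hp0,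
      Real.rpow_natCast]
  exact (hroot (fun i hi => add_nonneg (hf i hi) (hg i hi)) (add_nonneg hA hB)).1 <|
    hmink.trans (add_le_add ((hroot hf hA).2 hfA) ((hroot hg hB).2 hgB))

lemma expect_add_pow_le {ι : Type*} {s : Finset ι} {p : ℕ} {f g : ι → ℝ} {A B : ℝ}
    (hf : ∀ i ∈ s, 0 ≤ f i) (hg : ∀ i ∈ s, 0 ≤ g i) (hA : 0 ≤ A) (hB : 0 ≤ B)
    (hfA : 𝔼 i ∈ s, f i ^ p ≤ A ^ p) (hgB : 𝔼 i ∈ s, g i ^ p ≤ B ^ p) :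
    𝔼 i ∈ s, (f i + g i) ^ p ≤ (A + B) ^ p := by
  rcases eq_or_ne p 0 with rfl | hp
  · simpa using hfA
  rcases s.eq_empty_or_nonempty with rfl | hs
  · simpa using pow_nonneg (add_nonneg hA hB) p
  have hs0 : (0 : ℝ) < #s := by exact_mod_cast hs.card_pos
  set c : ℝ := (#s : ℝ) ^ (p : ℝ)⁻¹
  have hc : c ^ p = #s := Real.rpow_inv_natCast_pow hs0.le hp
  have hc0 : 0 ≤ c := by positivity
  have hiff (h : ι → ℝ) (C : ℝ) :
      𝔼 i ∈ s, h i ^ p ≤ C ^ p ↔ ∑ i ∈ s, h i ^ p ≤ (c * C) ^ p := by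
    rw [expect_eq_sum_div_card, div_le_iff₀' hs0, mul_pow, hc]
  rw [hiff] at hfA hgB ⊢
  rw [mul_add]
  exact sum_add_pow_le hp hf hg (by positivity) (by positivity) hfA hgB

lemma expect_pow_two_mul_le {ι : Type*} {s : Finset ι} (hs : s.Nonempty) (f : ι → ℝ) (p : ℕ) :
    (𝔼 i ∈ s, f i) ^ (2 * p) ≤ 𝔼 i ∈ s, f i ^ (2 * p) := by
  have hs0 : (#s : ℝ) ≠ 0 := by exact_mod_cast hs.card_ne_zero
  simpa only [expect_eq_sum_div_card, div_eq_inv_mul, mul_sum] using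
    Real.pow_arith_mean_le_arith_mean_pow_of_even s (fun _ => (#s : ℝ)⁻¹) f
      (fun _ _ => by positivity) (by simp [hs0]) (even_two_mul p)

lemma sq_sub_sq_mul_pow_sub_pow_le (x y : ℝ) (k : ℕ) :
    ((x + y) ^ 2 - (x - y) ^ 2) * (((x + y) ^ 2) ^ k - ((x - y) ^ 2) ^ k) ≤
      16 * k * y ^ 2 * (((x + y) ^ 2) ^ k + ((x - y) ^ 2) ^ k) := by
  rcases k with _ | k
  · simp
  set X := (x + y) ^ 2 with hX
  set Y := (x - y) ^ 2 with hY
  have hX0 : 0 ≤ X := sq_nonneg _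
  have hY0 : 0 ≤ Y := sq_nonneg _
  have hmax : x ^ 2 ≤ max X Y := by
    have : X + Y = 2 * x ^ 2 + 2 * y ^ 2 := by rw [hX, hY]; ring
    linarith [le_max_left X Y, le_max_right X Y, sq_nonneg y]
  have hmax_pow : max X Y ^ (k + 1) ≤ X ^ (k + 1) + Y ^ (k + 1) := by
    rcases max_choice X Y with h | h <;> rw [h] <;> linarith [pow_nonneg hX0 (k + 1),
      pow_nonneg hY0 (k + 1)]
  calc (X - Y) * (X ^ (k + 1) - Y ^ (k + 1)) ≤ |X - Y| * |X ^ (k + 1) - Y ^ (k + 1)| :=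
        (le_abs_self _).trans (abs_mul _ _).le
    _ ≤ |X - Y| * (|X - Y| * (k + 1 : ℕ) * max X Y ^ k) := by
        gcongr
        simpa [abs_of_nonneg hX0, abs_of_nonneg hY0] using abs_pow_sub_pow_le X Y (k + 1)
    _ = 16 * (k + 1 : ℕ) * y ^ 2 * (x ^ 2 * max X Y ^ k) := by
        linear_combination ((k + 1 : ℕ) * max X Y ^ k) * abs_mul_abs_self (X - Y) +
          ((k + 1 : ℕ) * max X Y ^ k) * (X - Y + 4 * x * y) * (hX - hY)
    _ ≤ 16 * (k + 1 : ℕ) * y ^ 2 * (X ^ (k + 1) + Y ^ (k + 1)) := by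
        gcongr
        refine le_trans ?_ hmax_pow
        rw [pow_succ' (max X Y)]
        gcongr

lemma two_point_pow_le (x y : ℝ) (k : ℕ) :
    ((x + y) ^ (2 * k) + (x - y) ^ (2 * k)) / 2 ≤ (x ^ 2 + 8 * k * y ^ 2) ^ k := by
  simp only [pow_mul]
  suffices h : ∀ m ≤ k, (((x + y) ^ 2) ^ m + ((x - y) ^ 2) ^ m) / 2 ≤
      (x ^ 2 + 8 * k * y ^ 2) ^ m from h k le_rfl
  intro m hm
  induction m with
  | zero => norm_num
  | succ m ih =>
    have hmk : (m : ℝ) + 1 ≤ k := by exact_mod_cast hm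
    calc (((x + y) ^ 2) ^ (m + 1) + ((x - y) ^ 2) ^ (m + 1)) / 2
        = (x ^ 2 + y ^ 2) * ((((x + y) ^ 2) ^ m + ((x - y) ^ 2) ^ m) / 2) +
          ((x + y) ^ 2 - (x - y) ^ 2) * (((x + y) ^ 2) ^ m - ((x - y) ^ 2) ^ m) / 4 := by ring
      _ ≤ (x ^ 2 + y ^ 2) * ((((x + y) ^ 2) ^ m + ((x - y) ^ 2) ^ m) / 2) +
          16 * m * y ^ 2 * (((x + y) ^ 2) ^ m + ((x - y) ^ 2) ^ m) / 4 := by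
          refine add_le_add le_rfl (div_le_div_of_nonneg_right ?_ (by norm_num))
          exact sq_sub_sq_mul_pow_sub_pow_le x y m
      _ = (x ^ 2 + (8 * m + 1) * y ^ 2) *
          ((((x + y) ^ 2) ^ m + ((x - y) ^ 2) ^ m) / 2) := by ring
      _ ≤ (x ^ 2 + 8 * k * y ^ 2) * (x ^ 2 + 8 * k * y ^ 2) ^ m := by
          gcongr
          · linarith
          · exact ih (by omega)
      _ = (x ^ 2 + 8 * k * y ^ 2) ^ (m + 1) := (pow_succ' _ _).symm

variable {α : Type*} [DecidableEq α]

lemma expect_add_rademacher_mul_pow_le {V : Finset α} {v : α} (hv : v ∉ V) {f g : Finset α → ℝ}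
    (hf : ∀ S, f (insert v S) = f S) (hg : ∀ S, g (insert v S) = g S) {p : ℕ} {A B : ℝ}
    (hA : 0 ≤ A) (hB : 0 ≤ B) (hfA : 𝔼 S ∈ V.powerset, f S ^ (2 * p) ≤ A ^ p)
    (hgB : 𝔼 S ∈ V.powerset, g S ^ (2 * p) ≤ B ^ p) :
    𝔼 S ∈ (insert v V).powerset, (f S + rademacher S v * g S) ^ (2 * p) ≤
      (A + 8 * p * B) ^ p := by
  rw [expect_powerset_insert hv]
  calc _ ≤ 𝔼 S ∈ V.powerset, (f S ^ 2 + 8 * p * g S ^ 2) ^ p := by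
        refine expect_le_expect fun S hS => ?_
        rw [rademacher_of_notMem fun h => hv (mem_powerset.1 hS h),
          rademacher_of_mem (mem_insert_self v S), hf, hg, one_mul, neg_one_mul, ← sub_eq_add_neg]
        exact two_point_pow_le (f S) (g S) p
    _ ≤ (A + 8 * p * B) ^ p := by
        refine expect_add_pow_le (fun S _ => sq_nonneg _) (fun S _ => by positivity) hA
          (by positivity) (by simpa only [pow_mul] using hfA) ?_
        simp only [mul_pow _ _ p, ← pow_mul, ← mul_expect]
        gcongr

lemma khinchine_even_moment (V : Finset α) (a : α → ℝ) (p : ℕ) :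
    𝔼 S ∈ V.powerset, (∑ v ∈ V, rademacher S v * a v) ^ (2 * p) ≤
      (8 * p * ∑ v ∈ V, a v ^ 2) ^ p := by
  induction V using Finset.induction_on with
  | empty => rcases eq_or_ne p 0 with rfl | hp <;> simp [*]
  | insert v V hv ih =>
    simp only [sum_insert hv, add_comm (rademacher _ v * a v)]
    have hinv : ∀ S, ∑ w ∈ V, rademacher (insert v S) w * a w = ∑ w ∈ V, rademacher S w * a w :=
      fun S => sum_congr rfl fun w hw => by
        rw [rademacher_insert_of_ne S (ne_of_mem_of_not_mem hw hv)]
    have hav : 𝔼 _S ∈ V.powerset, a v ^ (2 * p) ≤ (a v ^ 2) ^ p := by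
      rw [expect_powerset_const, pow_mul]
    refine (expect_add_rademacher_mul_pow_le hv hinv (fun _ => rfl) (by positivity)
      (sq_nonneg _) ih hav).trans_eq ?_
    ring

end Moments

section SignedColumnSums

lemma abs_pow_sub_pow_le_mul_add {x y : ℝ} (hx : 0 ≤ x) (hy : 0 ≤ y) (k : ℕ) :
    |x ^ k - y ^ k| ≤ |x - y| * k * (x ^ (k - 1) + y ^ (k - 1)) := by
  refine (abs_pow_sub_pow_le x y k).trans ?_
  gcongr
  rw [abs_of_nonneg hx, abs_of_nonneg hy]
  rcases max_choice x y with h | h <;> rw [h] <;>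
    linarith [pow_nonneg hx (k - 1), pow_nonneg hy (k - 1)]

lemma mul_pow_add_mul_pow_le_of_flip {x x' β z z' : ℝ} (hz : 0 ≤ z) (hz' : 0 ≤ z')
    (hx : x + x' = 2 * β) (hzx : z - z' = 2 * (x - x')) (k : ℕ) :
    x * z ^ k + x' * z' ^ k ≤ β * z ^ k + 8 * k * ((x ^ 2 + β ^ 2) * z ^ (k - 1)) +
      (β * z' ^ k + 8 * k * ((x' ^ 2 + β ^ 2) * z' ^ (k - 1))) := by
  obtain rfl : x' = 2 * β - x := by linarith
  have hdiff : (x - β) * (z ^ k - z' ^ k) ≤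
      4 * k * ((x - β) ^ 2 * z ^ (k - 1) + (x - β) ^ 2 * z' ^ (k - 1)) :=
    calc (x - β) * (z ^ k - z' ^ k) ≤ |x - β| * |z ^ k - z' ^ k| :=
          (le_abs_self _).trans (abs_mul _ _).le
      _ ≤ |x - β| * (|z - z'| * k * (z ^ (k - 1) + z' ^ (k - 1))) := by
          gcongr
          exact abs_pow_sub_pow_le_mul_add hz hz' k
      _ = 4 * k * ((x - β) ^ 2 * z ^ (k - 1) + (x - β) ^ 2 * z' ^ (k - 1)) := by
          rw [hzx, show 2 * (x - (2 * β - x)) = 4 * (x - β) by ring, abs_mul,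
            abs_of_pos (four_pos : (0 : ℝ) < 4), ← sq_abs (x - β)]
          ring
  have hsq : (x - β) ^ 2 ≤ 2 * (x ^ 2 + β ^ 2) := by linarith [sq_nonneg (x + β)]
  have hsq' : (x - β) ^ 2 ≤ 2 * ((2 * β - x) ^ 2 + β ^ 2) := by
    linarith [sq_nonneg (3 * β - x)]
  calc x * z ^ k + (2 * β - x) * z' ^ k = β * z ^ k + β * z' ^ k + (x - β) * (z ^ k - z' ^ k) := by
        ring
    _ ≤ β * z ^ k + β * z' ^ k + 4 * k * (2 * (x ^ 2 + β ^ 2) * z ^ (k - 1) +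
          2 * ((2 * β - x) ^ 2 + β ^ 2) * z' ^ (k - 1)) := by
        grw [hdiff, ← hsq, ← hsq']
    _ = _ := by ring

variable {ι α : Type*} [DecidableEq α]

/-- The `u`-th coordinate `∑ w, A u w * ε_w` of the image of the sign vector `ε = rademacher S`
under the matrix `A` with columns `W`. -/
def signedSum (A : ι → α → ℝ) (W S : Finset α) (u : ι) : ℝ := ∑ w ∈ W, A u w * rademacher S w

/-- The squared Euclidean length of `A ε` for the sign vector `ε = rademacher S`, where `A` has
rows `U` and columns `W`. -/
def signedNormSq (A : ι → α → ℝ) (U : Finset ι) (W S : Finset α) : ℝ :=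
  ∑ u ∈ U, signedSum A W S u ^ 2

/-- The contribution `ε_w * ⟨A ε, A e_w⟩` of the column `w` to the squared length of `A ε`. -/
def signedColumn (A : ι → α → ℝ) (U : Finset ι) (W S : Finset α) (w : α) : ℝ :=
  rademacher S w * ∑ u ∈ U, A u w * signedSum A W S u

variable (A : ι → α → ℝ) (U : Finset ι) {W : Finset α} (S : Finset α)

lemma signedNormSq_nonneg : 0 ≤ signedNormSq A U W S := sum_nonneg fun _ _ => sq_nonneg _

lemma sum_signedColumn : ∑ w ∈ W, signedColumn A U W S w = signedNormSq A U W S := by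
  simp only [signedColumn, mul_sum]
  rw [sum_comm]
  refine sum_congr rfl fun u _ => ?_
  rw [sq]
  nth_rewrite 2 [signedSum]
  rw [sum_mul]
  exact sum_congr rfl fun w _ => by ring

lemma signedColumn_sq (w : α) :
    signedColumn A U W S w ^ 2 = (∑ u ∈ U, A u w * signedSum A W S u) ^ 2 := by
  rw [signedColumn, mul_pow, rademacher_sq, one_mul]

variable {w : α} (hw : w ∈ W)
include hw

lemma signedSum_symmDiff (u : ι) :
    signedSum A W (S ∆ {w}) u = signedSum A W S u - 2 * (rademacher S w * A u w) := by
  have hrest : ∑ v ∈ W.erase w, A u v * rademacher (S ∆ {w}) v =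
      ∑ v ∈ W.erase w, A u v * rademacher S v :=
    sum_congr rfl fun v hv => by rw [rademacher_symmDiff_of_ne S (ne_of_mem_erase hv)]
  simp only [signedSum]
  rw [← add_sum_erase W _ hw, ← add_sum_erase W (fun v => A u v * rademacher S v) hw, hrest,
    rademacher_symmDiff_self]
  ring

lemma signedColumn_add_symmDiff :
    signedColumn A U W S w + signedColumn A U W (S ∆ {w}) w = 2 * ∑ u ∈ U, A u w ^ 2 := by
  simp only [signedColumn, signedSum_symmDiff A S hw, rademacher_symmDiff_self, mul_sum,
    ← sum_add_distrib]
  refine sum_congr rfl fun u _ => ?_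
  linear_combination (2 * A u w ^ 2) * rademacher_sq S w

lemma signedNormSq_sub_symmDiff :
    signedNormSq A U W S - signedNormSq A U W (S ∆ {w}) =
      2 * (signedColumn A U W S w - signedColumn A U W (S ∆ {w}) w) := by
  simp only [signedNormSq, signedColumn, signedSum_symmDiff A S hw, rademacher_symmDiff_self,
    mul_sum, ← sum_sub_distrib]
  exact sum_congr rfl fun u _ => by ring

lemma expect_signedColumn_mul_pow_le (k : ℕ) :
    𝔼 S ∈ W.powerset, signedColumn A U W S w * signedNormSq A U W S ^ k ≤
      𝔼 S ∈ W.powerset, ((∑ u ∈ U, A u w ^ 2) * signedNormSq A U W S ^ k +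
        8 * k * ((signedColumn A U W S w ^ 2 + (∑ u ∈ U, A u w ^ 2) ^ 2) *
          signedNormSq A U W S ^ (k - 1))) :=
  expect_powerset_le_of_add_symmDiff_le hw fun S =>
    mul_pow_add_mul_pow_le_of_flip (signedNormSq_nonneg A U S) (signedNormSq_nonneg A U _)
      (signedColumn_add_symmDiff A U S hw) (signedNormSq_sub_symmDiff A U S hw) k

end SignedColumnSums

section OperatorBound

variable {ι α : Type*} {A : ι → α → ℝ} {U : Finset ι} {W : Finset α} {a : ℝ}

lemma sum_sq_col_le_of_opBound
    (hA : ∀ x : ι → ℝ, ∑ w ∈ W, (∑ u ∈ U, A u w * x u) ^ 2 ≤ a * ∑ u ∈ U, x u ^ 2)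
    (ha : 0 ≤ a) {w : α} (hw : w ∈ W) : ∑ u ∈ U, A u w ^ 2 ≤ a := by
  have hcol : (∑ u ∈ U, A u w ^ 2) ^ 2 ≤ a * ∑ u ∈ U, A u w ^ 2 := by
    refine le_trans ?_ (hA fun u => A u w)
    simp only [sq (A _ w)]
    exact single_le_sum (f := fun v => (∑ u ∈ U, A u v * A u w) ^ 2) (fun _ _ => sq_nonneg _) hw
  by_contra! hlt
  nlinarith

variable [DecidableEq α]

lemma expect_signedNormSq_pow_succ_le
    (hA : ∀ x : ι → ℝ, ∑ w ∈ W, (∑ u ∈ U, A u w * x u) ^ 2 ≤ a * ∑ u ∈ U, x u ^ 2)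
    (ha : 0 ≤ a) (k : ℕ) :
    𝔼 S ∈ W.powerset, signedNormSq A U W S ^ (k + 1) ≤
      𝔼 S ∈ W.powerset, ((∑ w ∈ W, ∑ u ∈ U, A u w ^ 2) * signedNormSq A U W S ^ k +
        8 * k * ((a * signedNormSq A U W S + a * ∑ w ∈ W, ∑ u ∈ U, A u w ^ 2) *
          signedNormSq A U W S ^ (k - 1))) := by
  have hsplit : ∀ S, signedNormSq A U W S ^ (k + 1) =
      ∑ w ∈ W, signedColumn A U W S w * signedNormSq A U W S ^ k :=
    fun S => by rw [← sum_mul, sum_signedColumn, pow_succ']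
  simp only [hsplit]
  rw [expect_sum_comm]
  refine (sum_le_sum fun w hw => expect_signedColumn_mul_pow_le A U hw k).trans ?_
  rw [← expect_sum_comm]
  refine expect_le_expect fun S _ => ?_
  have hZ := signedNormSq_nonneg A U (W := W) S
  rw [sum_add_distrib, ← sum_mul, ← mul_sum, ← sum_mul, sum_add_distrib]
  gcongr
  · simp only [signedColumn_sq]
    exact hA _
  · rw [mul_sum]
    refine sum_le_sum fun w hw => ?_
    rw [sq]
    exact mul_le_mul_of_nonneg_right (sum_sq_col_le_of_opBound hA ha hw)
      (sum_nonneg fun _ _ => sq_nonneg _)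

lemma expect_signedNormSq_pow_le
    (hA : ∀ x : ι → ℝ, ∑ w ∈ W, (∑ u ∈ U, A u w * x u) ^ 2 ≤ a * ∑ u ∈ U, x u ^ 2)
    (ha : 0 ≤ a) (p : ℕ) :
    𝔼 S ∈ W.powerset, signedNormSq A U W S ^ p ≤
      (∑ w ∈ W, ∑ u ∈ U, A u w ^ 2 + 16 * p * a) ^ p := by
  set T := ∑ w ∈ W, ∑ u ∈ U, A u w ^ 2
  have : 0 ≤ T := sum_nonneg fun _ _ => sum_nonneg fun _ _ => sq_nonneg _
  suffices h : ∀ k ≤ p, 𝔼 S ∈ W.powerset, signedNormSq A U W S ^ k ≤ (T + 16 * p * a) ^ k from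
    h p le_rfl
  intro k
  induction k using Nat.strong_induction_on with | _ k ih
  intro hk
  rcases k with _ | k
  · simp only [pow_zero, expect_powerset_const, le_refl]
  refine (expect_signedNormSq_pow_succ_le hA ha k).trans ?_
  set R := T + 16 * p * a with hR
  have : 0 ≤ R := by positivity
  have hTR : T ≤ R := le_add_of_nonneg_right (by positivity)
  rcases k with _ | k
  · simpa [expect_powerset_const] using hTR
  have hkp : ((k + 1 : ℕ) : ℝ) ≤ p := by exact_mod_cast (Nat.le_succ _).trans hk
  have hmom₀ : 0 ≤ 𝔼 S ∈ W.powerset, signedNormSq A U W S ^ k :=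
    expect_nonneg fun S _ => pow_nonneg (signedNormSq_nonneg A U S) k
  have hmom₁ : 0 ≤ 𝔼 S ∈ W.powerset, signedNormSq A U W S ^ (k + 1) :=
    expect_nonneg fun S _ => pow_nonneg (signedNormSq_nonneg A U S) (k + 1)
  have ih₀ := ih k (by omega) (by omega)
  have ih₁ := ih (k + 1) (by omega) (by omega)
  calc _ = T * 𝔼 S ∈ W.powerset, signedNormSq A U W S ^ (k + 1) +
        8 * (k + 1 : ℕ) * (a * 𝔼 S ∈ W.powerset, signedNormSq A U W S ^ (k + 1) +
          a * T * 𝔼 S ∈ W.powerset, signedNormSq A U W S ^ k) := by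
        simp only [mul_expect, ← expect_add_distrib]
        exact expect_congr rfl fun S _ => by rw [Nat.add_sub_cancel]; ring
    _ ≤ T * R ^ (k + 1) + 8 * p * (a * R ^ (k + 1) + a * R * R ^ k) := by
        gcongr
    _ = R ^ (k + 1 + 1) := by rw [hR]; ring

end OperatorBound

section Decoupling

variable {α : Type*} [DecidableEq α]

lemma expect_decoupled_pow_le {U W : Finset α} (hWU : Disjoint W U) {A : α → α → ℝ} {a : ℝ}
    (hA : ∀ x : α → ℝ, ∑ w ∈ W, (∑ u ∈ U, A u w * x u) ^ 2 ≤ a * ∑ u ∈ U, x u ^ 2)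
    (ha : 0 ≤ a) (p : ℕ) :
    𝔼 S ∈ (W ∪ U).powerset, (∑ u ∈ U, rademacher S u * signedSum A W S u) ^ (2 * p) ≤
      (8 * p * (∑ w ∈ W, ∑ u ∈ U, A u w ^ 2 + 16 * p * a)) ^ p := by
  rw [expect_powerset_union hWU]
  have hrow : ∀ S ∈ W.powerset, ∀ S' ∈ U.powerset,
      ∑ u ∈ U, rademacher (S ∪ S') u * signedSum A W (S ∪ S') u =
        ∑ u ∈ U, rademacher S' u * signedSum A W S u := by
    intro S hS S' hS'
    refine sum_congr rfl fun u hu => congrArg₂ _ (rademacher_congr ?_)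
      (sum_congr rfl fun w hw => congrArg _ (rademacher_congr ?_))
    · have hu : u ∉ S := fun h => disjoint_right.1 hWU hu (mem_powerset.1 hS h)
      simp [hu]
    · have hw : w ∉ S' := fun h => disjoint_left.1 hWU hw (mem_powerset.1 hS' h)
      simp [hw]
  calc _ ≤ 𝔼 S ∈ W.powerset, (8 * p) ^ p * signedNormSq A U W S ^ p := by
        refine expect_le_expect fun S hS => ?_
        rw [expect_congr rfl fun S' hS' => congrArg (· ^ (2 * p)) (hrow S hS S' hS'), ← mul_pow]
        exact khinchine_even_moment U (signedSum A W S) p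
    _ ≤ (8 * p * (∑ w ∈ W, ∑ u ∈ U, A u w ^ 2 + 16 * p * a)) ^ p := by
        rw [← mul_expect, mul_pow (8 * (p : ℝ))]
        gcongr
        exact expect_signedNormSq_pow_le hA ha p

/-- The Rademacher chaos `∑ e ∈ Q, ∏ v ∈ e, ε_v` of the hypergraph `Q` at the sign vector
`ε = rademacher S`. -/
def chaos (Q : Finset (Finset α)) (S : Finset α) : ℝ := ∑ e ∈ Q, ∏ v ∈ e, rademacher S v

/-- The edges of the graph `G`, given as a family of pairs, that cross from `c` to its
complement. -/
def cut (G : Finset (Finset α)) (c : Finset α) : Finset (Finset α) := {e ∈ G | #(e ∩ c) = 1}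

/-- The adjacency matrix of the graph whose edges are the pairs in `G`. -/
def adjacency (G : Finset (Finset α)) (u w : α) : ℝ := if {u, w} ∈ G then 1 else 0

variable {V : Finset α} {G : Finset (Finset α)} {c : Finset α}

lemma ite_card_inter_eq_one {e : Finset α} (he : #e = 2) :
    (if #(e ∩ c) = 1 then 1 else 0 : ℝ) = (1 - ∏ v ∈ e, rademacher c v) / 2 := by
  obtain ⟨u, w, huw, rfl⟩ := card_eq_two.1 he
  rw [prod_pair huw]
  by_cases hu : u ∈ c <;> by_cases hw : w ∈ c <;>
    simp [rademacher, hu, hw, huw, insert_inter_of_mem, insert_inter_of_notMem]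

lemma expect_chaos_cut (hG : G ⊆ V.powersetCard 2) (S : Finset α) :
    𝔼 c ∈ V.powerset, chaos (cut G c) S = chaos G S / 2 := by
  simp only [chaos, cut, sum_filter]
  rw [expect_sum_comm, sum_div]
  refine sum_congr rfl fun e he => ?_
  obtain ⟨heV, he2⟩ := mem_powersetCard.1 (hG he)
  have hchar : ∀ c, (if #(e ∩ c) = 1 then ∏ v ∈ e, rademacher S v else 0) =
      (1 + -1 * ∏ v ∈ e, rademacher c v) * ((∏ v ∈ e, rademacher S v) / 2) := fun c => by
    rw [← one_mul (∏ v ∈ e, rademacher S v), ← ite_zero_mul, ite_card_inter_eq_one he2]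
    ring
  simp only [hchar]
  rw [← expect_mul, expect_add_distrib, ← mul_expect, expect_powerset_const,
    expect_prod_rademacher_eq_zero heV (card_pos.1 (by omega)), mul_zero, add_zero, one_mul]

lemma expect_chaos_pow_le_of_cut (hG : G ⊆ V.powersetCard 2) {p : ℕ} {B : ℝ}
    (hcut : ∀ c ⊆ V, 𝔼 S ∈ V.powerset, chaos (cut G c) S ^ (2 * p) ≤ B ^ p) :
    𝔼 S ∈ V.powerset, chaos G S ^ (2 * p) ≤ (4 * B) ^ p := by
  calc 𝔼 S ∈ V.powerset, chaos G S ^ (2 * p)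
      = 𝔼 S ∈ V.powerset, 4 ^ p * (𝔼 c ∈ V.powerset, chaos (cut G c) S) ^ (2 * p) := by
        refine expect_congr rfl fun S _ => ?_
        rw [expect_chaos_cut hG, pow_mul, pow_mul, ← mul_pow]
        ring
    _ ≤ 𝔼 S ∈ V.powerset, 4 ^ p * 𝔼 c ∈ V.powerset, chaos (cut G c) S ^ (2 * p) := by
        gcongr with S
        exact expect_pow_two_mul_le (powerset_nonempty V) _ p
    _ = 4 ^ p * 𝔼 c ∈ V.powerset, 𝔼 S ∈ V.powerset, chaos (cut G c) S ^ (2 * p) := by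
        rw [← mul_expect, expect_comm]
    _ ≤ 4 ^ p * B ^ p := by
        gcongr
        exact expect_le (powerset_nonempty V) fun c hc => hcut c (mem_powerset.1 hc)
    _ = (4 * B) ^ p := (mul_pow _ _ _).symm

lemma sum_cut_eq_sum_adjacency (hG : G ⊆ V.powersetCard 2) (f : α → ℝ) :
    ∑ e ∈ cut G c, ∏ v ∈ e, f v =
      ∑ u ∈ c, f u * ∑ w ∈ V \ c, adjacency G u w * f w := by
  have hpairs : ∑ u ∈ c, f u * ∑ w ∈ V \ c, adjacency G u w * f w =
      ∑ x ∈ c ×ˢ (V \ c) with {x.1, x.2} ∈ G, f x.1 * f x.2 := by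
    simp only [sum_filter, sum_product, mul_sum, adjacency]
    exact sum_congr rfl fun u _ => sum_congr rfl fun w _ => by split_ifs <;> ring
  rw [hpairs]
  symm
  refine sum_nbij (fun x => {x.1, x.2}) ?_ ?_ ?_ ?_
  · simp only [mem_filter, mem_product, mem_sdiff, cut, and_imp, Prod.forall]
    intro u w hu _ hw he
    exact ⟨he, by rw [insert_inter_of_mem hu, singleton_inter_of_notMem hw]; simp⟩
  · rintro ⟨u, w⟩ hx ⟨u', w'⟩ hx' heq
    simp only [coe_filter, Set.mem_ofPred_eq, mem_product, mem_sdiff] at hx hx' heq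
    have hu : u ∈ ({u', w'} : Finset α) := heq ▸ mem_insert_self u _
    have hw : w ∈ ({u', w'} : Finset α) := heq ▸ mem_insert_of_mem (mem_singleton_self w)
    grind
  · intro e he
    obtain ⟨heG, hec⟩ := mem_filter.1 he
    obtain ⟨heV, he2⟩ := mem_powersetCard.1 (hG heG)
    obtain ⟨u, hu⟩ := card_eq_one.1 hec
    obtain ⟨hue, huc⟩ := mem_inter.1 (hu ▸ mem_singleton_self u)
    obtain ⟨w, hw⟩ := card_eq_one.1 ((card_erase_of_mem hue).trans (by rw [he2]))
    obtain ⟨hwu, hwe⟩ := mem_erase.1 (hw ▸ mem_singleton_self w)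
    have hwc : w ∉ c := fun h => hwu (mem_singleton.1 (hu ▸ mem_inter.2 ⟨hwe, h⟩))
    have heq : {u, w} = e := by rw [← hw, insert_erase hue]
    refine ⟨(u, w), ?_, heq⟩
    simp [heq, heG, huc, heV hwe, hwc]
  · rintro ⟨u, w⟩ hx
    simp only [mem_filter, mem_product, mem_sdiff] at hx
    exact (prod_pair (ne_of_mem_of_not_mem hx.1.1 hx.1.2.2)).symm

end Decoupling

section Biclique

variable {ι β : Type*}

lemma exists_mul_card_le_card_filter {r : ι → β → Prop} [DecidableRel r] {U : Finset ι}
    {W : Finset β} (hW : W.Nonempty) {κ : ℝ} (hdeg : ∀ u ∈ U, κ * #W ≤ #{w ∈ W | r u w}) :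
    ∃ w ∈ W, κ * #U ≤ #{u ∈ U | r u w} := by
  refine exists_le_of_sum_le hW ?_
  calc ∑ _w ∈ W, κ * (#U : ℝ) = ∑ _u ∈ U, κ * (#W : ℝ) := by
        simp only [sum_const, nsmul_eq_mul]; ring
    _ ≤ ∑ u ∈ U, (#{w ∈ W | r u w} : ℝ) := sum_le_sum hdeg
    _ = ∑ w ∈ W, (#{u ∈ U | r u w} : ℝ) := by
        exact_mod_cast sum_card_bipartiteAbove_eq_sum_card_bipartiteBelow r

lemma exists_biclique_of_forall_le_degree {r : ι → β → Prop} [DecidableRel r]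
    {U : Finset ι} {W : Finset β} {κ : ℝ} (hκ0 : 0 ≤ κ) (hκ1 : κ ≤ 1)
    (hdeg : ∀ u ∈ U, κ * #W ≤ #{w ∈ W | r u w}) {s : ℕ} (hs : 2 * s ≤ κ * #W) :
    ∃ L ⊆ W, #L = s ∧ ∃ L' ⊆ U, (κ / 2) ^ s * #U ≤ #L' ∧ ∀ w ∈ L, ∀ u ∈ L', r u w := by
  classical
  induction s with
  | zero => exact ⟨∅, by simp, rfl, U, Subset.rfl, by simp, by simp⟩
  | succ s ih =>
    push_cast at hs
    obtain ⟨L, hLW, hLs, L', hL'U, hL', hr⟩ := ih (by linarith)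
    have hWL : (#(W \ L) : ℝ) = #W - s := by rw [cast_card_sdiff hLW, hLs]
    have hne : (W \ L).Nonempty := by
      have : (0 : ℝ) < #(W \ L) := by
        rw [hWL]; nlinarith [(Nat.cast_nonneg #W : (0 : ℝ) ≤ #W)]
      exact card_pos.1 (by exact_mod_cast this)
    have hdegL : ∀ u ∈ L', κ / 2 * #W ≤ #{w ∈ W \ L | r u w} := by
      intro u hu
      have hsub : #{w ∈ W | r u w} ≤ #{w ∈ W \ L | r u w} + s := by
        rw [← hLs]
        refine (card_le_card fun w hw => ?_).trans (card_union_le _ L)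
        by_cases hwL : w ∈ L <;> simp_all
      have hu := hdeg u (hL'U hu)
      have : (#{w ∈ W | r u w} : ℝ) ≤ #{w ∈ W \ L | r u w} + s := by exact_mod_cast hsub
      linarith
    obtain ⟨w, hw, hcount⟩ : ∃ w ∈ W \ L, κ / 2 * #L' ≤ #{u ∈ L' | r u w} := by
      refine exists_mul_card_le_card_filter hne fun u hu => (hdegL u hu).trans' ?_
      gcongr
      exact sdiff_subset
    obtain ⟨hwW, hwL⟩ := mem_sdiff.1 hw
    refine ⟨insert w L, insert_subset hwW hLW, by rw [card_insert_of_notMem hwL, hLs],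
      {u ∈ L' | r u w}, (filter_subset _ _).trans hL'U, ?_, ?_⟩
    · calc (κ / 2) ^ (s + 1) * #U = κ / 2 * ((κ / 2) ^ s * #U) := by ring
        _ ≤ κ / 2 * #L' := by gcongr
        _ ≤ _ := hcount
    · simp only [forall_mem_insert, mem_filter, and_imp]
      exact ⟨fun u _ hu => hu, fun w hw u hu _ => hr w hw u hu⟩

variable {U : Finset ι} {D : ι → ℝ} {C : ι → ι → ℝ} {n ρ Γ : ℝ}

lemma exists_mul_lt_sum_sq_row (hC0 : ∀ u u', 0 ≤ C u u') (hCl : ∀ u u', C u u' ≤ D u)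
    (hCr : ∀ u u', C u u' ≤ D u') (hρ : 0 ≤ ρ) (hnΓ : 0 ≤ n * Γ)
    (h : (ρ * ∑ u ∈ U, D u + n * Γ) ^ 2 < ∑ u ∈ U, ∑ u' ∈ U, C u u' ^ 2) :
    n * Γ < ∑ u ∈ U, D u ∧
      ∃ u₀ ∈ U, ρ ^ 2 * (∑ u ∈ U, D u) * D u₀ < ∑ u' ∈ U, C u₀ u' ^ 2 := by
  have hD0 : ∀ u, 0 ≤ D u := fun u => (hC0 u u).trans (hCl u u)
  have hE0 : 0 ≤ ∑ u ∈ U, D u := sum_nonneg fun u _ => hD0 u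
  constructor
  · have hE : ∑ u ∈ U, ∑ u' ∈ U, C u u' ^ 2 ≤ (∑ u ∈ U, D u) ^ 2 := by
      rw [sq (∑ u ∈ U, D u), sum_mul_sum]
      gcongr with u _ u' _
      rw [sq]
      exact mul_le_mul (hCl u u') (hCr u u') (hC0 u u') (hD0 u)
    have := lt_of_pow_lt_pow_left₀ 2 hE0 (h.trans_le hE)
    nlinarith [mul_nonneg hρ hE0]
  · refine exists_lt_of_sum_lt (lt_of_le_of_lt ?_ h)
    rw [← mul_sum]
    nlinarith [mul_nonneg hρ hE0]

lemma exists_row_with_many_large_entries (hC0 : ∀ u u', 0 ≤ C u u')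
    (hCl : ∀ u u', C u u' ≤ D u) (hCr : ∀ u u', C u u' ≤ D u') (hD : ∀ u, D u ≤ n)
    (hU : #U ≤ n) (hρ : 0 ≤ ρ) (hΓ : 0 ≤ Γ)
    (h : (ρ * ∑ u ∈ U, D u + n * Γ) ^ 2 < ∑ u ∈ U, ∑ u' ∈ U, C u u' ^ 2) :
    ∃ u₀ ∈ U, ρ ^ 2 * Γ ≤ D u₀ ∧
      ρ ^ 2 * Γ / 2 ≤ #{u' ∈ U | ρ ^ 2 / 2 * D u₀ ≤ C u₀ u'} := by
  have hn : 0 ≤ n := (Nat.cast_nonneg _).trans hU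
  obtain ⟨hE, u₀, hu₀, hrow⟩ := exists_mul_lt_sum_sq_row hC0 hCl hCr hρ (mul_nonneg hn hΓ) h
  set E := ∑ u ∈ U, D u with hE_def
  have hE0 : 0 ≤ E := (mul_nonneg hn hΓ).trans hE.le
  set d := D u₀
  set U' := {u' ∈ U | ρ ^ 2 / 2 * d ≤ C u₀ u'} with hU'
  have hd0 : 0 ≤ d := (hC0 u₀ u₀).trans (hCl u₀ u₀)
  have hsq : ∀ u, C u₀ u ^ 2 ≤ d ^ 2 := fun u => pow_le_pow_left₀ (hC0 _ _) (hCl _ _) 2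
  have hd : 0 < d := by
    refine hd0.lt_of_ne fun hd => hrow.not_ge ?_
    exact (sum_nonpos fun u _ => (hsq u).trans_eq (by rw [← hd]; norm_num)).trans (by positivity)
  have hn0 : 0 < n := hd.trans_le (hD u₀)
  refine ⟨u₀, hu₀, ?_, ?_⟩
  · have hcard : ∑ u' ∈ U, C u₀ u' ^ 2 ≤ n * d ^ 2 :=
      (sum_le_card_nsmul _ _ _ fun u _ => hsq u).trans <| by rw [nsmul_eq_mul]; gcongr
    have : ρ ^ 2 * E < n * d := by nlinarith
    have : ρ ^ 2 * (n * Γ) ≤ ρ ^ 2 * E := by gcongr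
    nlinarith
  · have hsmall : ∑ u' ∈ U with ¬ρ ^ 2 / 2 * d ≤ C u₀ u', C u₀ u' ^ 2 ≤ ρ ^ 2 / 2 * d * E := by
      rw [hE_def, mul_sum]
      refine (sum_le_sum fun u hu => ?_).trans
        (sum_le_sum_of_subset_of_nonneg (filter_subset _ _) fun u _ _ =>
          mul_nonneg (by positivity) ((hC0 u₀ u).trans (hCr u₀ u)))
      rw [sq]
      exact mul_le_mul (not_le.1 (mem_filter.1 hu).2).le (hCr _ _) (hC0 _ _) (by positivity)
    have hlarge : ∑ u' ∈ U', C u₀ u' ^ 2 ≤ #U' * d ^ 2 :=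
      (sum_le_card_nsmul _ _ _ fun u _ => hsq u).trans_eq (nsmul_eq_mul _ _)
    rw [← sum_filter_add_sum_filter_not U (fun u' => ρ ^ 2 / 2 * d ≤ C u₀ u')] at hrow
    have : ρ ^ 2 * E / 2 < #U' * d := by nlinarith
    have : (#U' : ℝ) * d ≤ #U' * n := by gcongr; exact hD u₀
    nlinarith

end Biclique

section GraphMoments

lemma opBound_of_sum_sq_codegree_le {ι β : Type*} {A : ι → β → ℝ} {U : Finset ι} {W : Finset β}
    {a : ℝ} (ha : 0 ≤ a)
    (hA : ∑ u ∈ U, ∑ u' ∈ U, (∑ w ∈ W, A u w * A u' w) ^ 2 ≤ a ^ 2) (x : ι → ℝ) :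
    ∑ w ∈ W, (∑ u ∈ U, A u w * x u) ^ 2 ≤ a * ∑ u ∈ U, x u ^ 2 := by
  have hexpand : ∑ w ∈ W, (∑ u ∈ U, A u w * x u) ^ 2 =
      ∑ i ∈ U ×ˢ U, (∑ w ∈ W, A i.1 w * A i.2 w) * (x i.1 * x i.2) := by
    simp only [sq, sum_mul_sum, ← sum_product']
    rw [sum_product_right]
    refine sum_congr rfl fun i _ => ?_
    rw [sum_mul]
    exact sum_congr rfl fun w _ => by ring
  have hx : ∑ i ∈ U ×ˢ U, (x i.1 * x i.2) ^ 2 = (∑ u ∈ U, x u ^ 2) ^ 2 := by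
    simp only [sq (∑ u ∈ U, x u ^ 2), sum_mul_sum, ← sum_product', mul_pow]
  refine (le_abs_self _).trans (abs_le_of_sq_le_sq ?_ (by positivity))
  rw [hexpand, mul_pow, ← hx]
  refine (sum_mul_sq_le_sq_mul_sq _ _ _).trans ?_
  gcongr
  rwa [sum_product]

lemma sum_sq_codegree_le_of_no_biclique {ι β : Type*} {r : ι → β → Prop} [DecidableRel r]
    {U : Finset ι} {W : Finset β} {n s t : ℕ} {ρ Γ : ℝ} (hU : #U ≤ n) (hW : #W ≤ n)
    (hρ0 : 0 ≤ ρ) (hρ1 : ρ ≤ 1) (hΓ : 0 ≤ Γ) (hs : 4 * s ≤ ρ ^ 4 * Γ)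
    (ht : t ≤ (ρ ^ 2 / 4) ^ s * (ρ ^ 2 * Γ / 2))
    (hno : ¬∃ L ⊆ W, #L = s ∧ ∃ L' ⊆ U, t ≤ #L' ∧ ∀ w ∈ L, ∀ u ∈ L', r u w) :
    ∑ u ∈ U, ∑ u' ∈ U, (#{w ∈ W | r u w ∧ r u' w} : ℝ) ^ 2 ≤
      (ρ * ∑ u ∈ U, (#{w ∈ W | r u w} : ℝ) + n * Γ) ^ 2 := by
  by_contra! hlt
  have hCl : ∀ u u', (#{w ∈ W | r u w ∧ r u' w} : ℝ) ≤ #{w ∈ W | r u w} := fun u u' =>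
    Nat.cast_le.2 <| card_le_card <| monotone_filter_right W fun _ _ => And.left
  have hCr : ∀ u u', (#{w ∈ W | r u w ∧ r u' w} : ℝ) ≤ #{w ∈ W | r u' w} := fun u u' =>
    Nat.cast_le.2 <| card_le_card <| monotone_filter_right W fun _ _ => And.right
  obtain ⟨u₀, -, hdeg, hmany⟩ := exists_row_with_many_large_entries (U := U) (n := n)
    (D := fun u => (#{w ∈ W | r u w} : ℝ)) (C := fun u u' => (#{w ∈ W | r u w ∧ r u' w} : ℝ))
    (fun _ _ => Nat.cast_nonneg _) hCl hCr
    (fun u => Nat.cast_le.2 <| (card_filter_le W _).trans hW) (Nat.cast_le.2 hU) hρ0 hΓ hlt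
  set W' := {w ∈ W | r u₀ w}
  set U' := {u ∈ U | ρ ^ 2 / 2 * #W' ≤ (#{w ∈ W | r u₀ w ∧ r u w} : ℝ)}
  have hsW' : 2 * (s : ℝ) ≤ ρ ^ 2 / 2 * #W' := by
    have := mul_le_mul_of_nonneg_left hdeg (sq_nonneg ρ)
    linarith
  obtain ⟨L, hL, hLs, L', hL', hL'card, hr⟩ :=
    exists_biclique_of_forall_le_degree (r := r) (U := U') (W := W') (by positivity)
      (by linarith [pow_le_one₀ hρ0 hρ1 (n := 2)])
      (fun u hu => (mem_filter.1 hu).2.trans_eq (by rw [filter_filter])) hsW'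
  refine hno ⟨L, hL.trans (filter_subset _ _), hLs, L', hL'.trans (filter_subset _ _), ?_, hr⟩
  have : (t : ℝ) ≤ #L' :=
    calc (t : ℝ) ≤ (ρ ^ 2 / 4) ^ s * (ρ ^ 2 * Γ / 2) := ht
      _ = (ρ ^ 2 / 2 / 2) ^ s * (ρ ^ 2 * Γ / 2) := by ring
      _ ≤ (ρ ^ 2 / 2 / 2) ^ s * #U' := by gcongr
      _ ≤ #L' := hL'card
  exact_mod_cast this

variable {α : Type*} [DecidableEq α]

/-- The hypergraph `Q` on the vertex set `V` contains the join of a `k`-set `T` with the complete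
bipartite graph on parts `L` of size `s` and `L'` of size at least `t`: all the sets
`T ∪ {x, y}` with `x ∈ L` and `y ∈ L'` belong to `Q`. -/
def HasBiclique (V : Finset α) (Q : Finset (Finset α)) (k s t : ℕ) : Prop :=
  ∃ T ⊆ V, ∃ L ⊆ V, ∃ L' ⊆ V, #T = k ∧ #L = s ∧ t ≤ #L' ∧ Disjoint T (L ∪ L') ∧ Disjoint L L' ∧
    ∀ x ∈ L, ∀ y ∈ L', T ∪ {x, y} ∈ Q

variable {V c : Finset α} {G : Finset (Finset α)} {s t : ℕ} {ρ Γ : ℝ}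

lemma sum_adjacency_eq_card_cut (hG : G ⊆ V.powersetCard 2) :
    ∑ u ∈ c, ∑ w ∈ V \ c, adjacency G u w = #(cut G c) := by
  simpa using (sum_cut_eq_sum_adjacency hG (c := c) fun _ => (1 : ℝ)).symm

lemma opBound_adjacency (hG : G ⊆ V.powersetCard 2) (hc : c ⊆ V) (hρ0 : 0 ≤ ρ) (hρ1 : ρ ≤ 1)
    (hΓ : 0 ≤ Γ) (hs : 4 * s ≤ ρ ^ 4 * Γ) (ht : t ≤ (ρ ^ 2 / 4) ^ s * (ρ ^ 2 * Γ / 2))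
    (hno : ¬HasBiclique V G 0 s t) (x : α → ℝ) :
    ∑ w ∈ V \ c, (∑ u ∈ c, adjacency G u w * x u) ^ 2 ≤
      (ρ * #G + #V * Γ) * ∑ u ∈ c, x u ^ 2 := by
  refine opBound_of_sum_sq_codegree_le (by positivity) ?_ x
  have hcodeg := sum_sq_codegree_le_of_no_biclique (r := fun u w => {u, w} ∈ G) (card_le_card hc)
    (card_le_card (sdiff_subset (t := c))) hρ0 hρ1 hΓ hs ht <| by
      rintro ⟨L, hL, hLs, L', hL', hL't, hr⟩
      refine hno ⟨∅, empty_subset V, L, hL.trans sdiff_subset, L', hL'.trans hc, rfl, hLs, hL't,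
        disjoint_empty_left _, disjoint_of_subset_left hL
          (disjoint_of_subset_right hL' sdiff_disjoint), fun w hw u hu => ?_⟩
      rw [empty_union, pair_comm]
      exact hr w hw u hu
  have hentry : ∀ u u', ∑ w ∈ V \ c, adjacency G u w * adjacency G u' w =
      #{w ∈ V \ c | {u, w} ∈ G ∧ {u', w} ∈ G} := fun u u' => by
    simp [adjacency, ← ite_and, sum_boole, and_comm]
  have hdeg : ∑ u ∈ c, (#{w ∈ V \ c | {u, w} ∈ G} : ℝ) = #(cut G c) := by
    simp [← sum_adjacency_eq_card_cut hG, adjacency, sum_boole]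
  simp only [hentry]
  refine hcodeg.trans ?_
  rw [hdeg]
  gcongr
  exact filter_subset _ _

lemma expect_chaos_cut_pow_le (hG : G ⊆ V.powersetCard 2) (hc : c ⊆ V) {a : ℝ} (ha : 0 ≤ a)
    (hop : ∀ x : α → ℝ, ∑ w ∈ V \ c, (∑ u ∈ c, adjacency G u w * x u) ^ 2 ≤ a * ∑ u ∈ c, x u ^ 2)
    (p : ℕ) :
    𝔼 S ∈ V.powerset, chaos (cut G c) S ^ (2 * p) ≤ (8 * p * (#G + 16 * p * a)) ^ p := by
  have hform : ∀ S, chaos (cut G c) S =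
      ∑ u ∈ c, rademacher S u * signedSum (adjacency G) (V \ c) S u :=
    fun S => sum_cut_eq_sum_adjacency hG (rademacher S)
  have hsq : ∑ w ∈ V \ c, ∑ u ∈ c, adjacency G u w ^ 2 = #(cut G c) := by
    rw [sum_comm, ← sum_adjacency_eq_card_cut hG]
    simp [adjacency]
  have hdec := expect_decoupled_pow_le sdiff_disjoint hop ha p
  rw [sdiff_union_of_subset hc, hsq] at hdec
  simp only [hform]
  refine hdec.trans ?_
  gcongr
  exact filter_subset _ _

lemma expect_chaos_graph_pow_le (hG : G ⊆ V.powersetCard 2) (hρ0 : 0 ≤ ρ) (hρ1 : ρ ≤ 1)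
    (hΓ : 0 ≤ Γ) (hs : 4 * s ≤ ρ ^ 4 * Γ) (ht : t ≤ (ρ ^ 2 / 4) ^ s * (ρ ^ 2 * Γ / 2))
    (hno : ¬HasBiclique V G 0 s t) (p : ℕ) :
    𝔼 S ∈ V.powerset, chaos G S ^ (2 * p) ≤
      ((32 * p + 512 * p ^ 2 * ρ) * #G + 512 * p ^ 2 * Γ * #V) ^ p := by
  refine (expect_chaos_pow_le_of_cut hG fun c hc => expect_chaos_cut_pow_le hG hc (by positivity)
    (opBound_adjacency hG hc hρ0 hρ1 hΓ hs ht hno) p).trans_eq ?_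
  ring

end GraphMoments

section Slicing

variable {α : Type*} [DecidableEq α] {V W : Finset α} {Q R : Finset (Finset α)} {v : α}
  {k s t : ℕ}

lemma chaos_insert_of_forall_notMem (hQ : ∀ e ∈ Q, v ∉ e) (S : Finset α) :
    chaos Q (insert v S) = chaos Q S :=
  sum_congr rfl fun e he => prod_congr rfl fun _ hw =>
    rademacher_insert_of_ne S (ne_of_mem_of_not_mem hw (hQ e he))

lemma chaos_eq_nonMemberSubfamily_add_memberSubfamily (Q : Finset (Finset α)) (v : α)
    (S : Finset α) :
    chaos Q S =
      chaos (Q.nonMemberSubfamily v) S + rademacher S v * chaos (Q.memberSubfamily v) S := by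
  have hinj : Set.InjOn (fun e : Finset α => e.erase v) (({e ∈ Q | v ∈ e} : Finset _) : Set _) :=
    fun e he e' he' => erase_injOn' v (mem_filter.1 he).2 (mem_filter.1 he').2
  unfold chaos memberSubfamily nonMemberSubfamily
  rw [sum_image hinj, mul_sum, add_comm, ← sum_filter_add_sum_filter_not Q (fun e => v ∈ e)]
  exact congrArg (· + _) <| sum_congr rfl fun e he =>
    (mul_prod_erase e _ (mem_filter.1 he).2).symm

lemma nonMemberSubfamily_subset_powersetCard (hQ : Q ⊆ (insert v V).powersetCard k) :
    Q.nonMemberSubfamily v ⊆ V.powersetCard k := fun e he => by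
  obtain ⟨heQ, hve⟩ := mem_nonMemberSubfamily.1 he
  obtain ⟨heV, hek⟩ := mem_powersetCard.1 (hQ heQ)
  exact mem_powersetCard.2 ⟨(subset_insert_iff_of_notMem hve).1 heV, hek⟩

lemma memberSubfamily_subset_powersetCard (hQ : Q ⊆ (insert v V).powersetCard (k + 1)) :
    Q.memberSubfamily v ⊆ V.powersetCard k := fun e he => by
  obtain ⟨heQ, hve⟩ := mem_memberSubfamily.1 he
  obtain ⟨heV, hek⟩ := mem_powersetCard.1 (hQ heQ)
  rw [card_insert_of_notMem hve, add_left_inj] at hek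
  exact mem_powersetCard.2
    ⟨(subset_insert_iff_of_notMem hve).1 ((subset_insert v e).trans heV), hek⟩

lemma HasBiclique.mono (h : HasBiclique V Q k s t) (hVW : V ⊆ W) (hQR : Q ⊆ R) :
    HasBiclique W R k s t :=
  let ⟨T, hT, L, hL, L', hL', hTk, hLs, hLt, hTL, hLL, hQ⟩ := h
  ⟨T, hT.trans hVW, L, hL.trans hVW, L', hL'.trans hVW, hTk, hLs, hLt, hTL, hLL,
    fun x hx y hy => hQR (hQ x hx y hy)⟩

lemma HasBiclique.of_memberSubfamily (h : HasBiclique V (Q.memberSubfamily v) k s t)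
    (hv : v ∉ V) : HasBiclique (insert v V) Q (k + 1) s t := by
  obtain ⟨T, hT, L, hL, L', hL', hTk, hLs, hLt, hTL, hLL, hQ⟩ := h
  refine ⟨insert v T, insert_subset_insert v hT, L, hL.trans (subset_insert v V), L',
    hL'.trans (subset_insert v V), by rw [card_insert_of_notMem (fun h => hv (hT h)), hTk],
    hLs, hLt, disjoint_insert_left.2 ⟨fun h => hv (union_subset hL hL' h), hTL⟩, hLL,
    fun x hx y hy => ?_⟩
  rw [insert_union]
  exact (mem_memberSubfamily.1 (hQ x hx y hy)).1

lemma expect_chaos_insert_pow_le (hv : v ∉ V) {p : ℕ} {A B : ℝ} (hA : 0 ≤ A) (hB : 0 ≤ B)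
    (h₀ : 𝔼 S ∈ V.powerset, chaos (Q.nonMemberSubfamily v) S ^ (2 * p) ≤ A ^ p)
    (h₁ : 𝔼 S ∈ V.powerset, chaos (Q.memberSubfamily v) S ^ (2 * p) ≤ B ^ p) :
    𝔼 S ∈ (insert v V).powerset, chaos Q S ^ (2 * p) ≤ (A + 8 * p * B) ^ p := by
  simp only [chaos_eq_nonMemberSubfamily_add_memberSubfamily Q v]
  exact expect_add_rademacher_mul_pow_le hv
    (chaos_insert_of_forall_notMem fun e he => (mem_nonMemberSubfamily.1 he).2)
    (chaos_insert_of_forall_notMem fun e he => (mem_memberSubfamily.1 he).2) hA hB h₀ h₁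

lemma expect_chaos_pow_le_of_graph {p : ℕ} {θ γ : ℝ} (hθ : 0 ≤ θ) (hγ : 0 ≤ γ)
    (hgraph : ∀ (W : Finset α) (G : Finset (Finset α)), G ⊆ W.powersetCard 2 →
      ¬HasBiclique W G 0 s t → 𝔼 S ∈ W.powerset, chaos G S ^ (2 * p) ≤ (θ * #G + γ * #W) ^ p)
    (hQ : Q ⊆ V.powersetCard (k + 2)) (hno : ¬HasBiclique V Q k s t) :
    𝔼 S ∈ V.powerset, chaos Q S ^ (2 * p) ≤
      ((8 * p) ^ k * (θ * #Q + γ * #V ^ (k + 1))) ^ p := by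
  induction k generalizing V Q with
  | zero => simpa using hgraph V Q hQ hno
  | succ k ihk =>
    induction V using Finset.induction generalizing Q with
    | empty =>
      obtain rfl : Q = ∅ := subset_empty.1 (hQ.trans_eq (powersetCard_eq_empty.2 (by simp)))
      simp [chaos, pow_mul]
    | insert v V hv ihV =>
      have h₀ := ihV (nonMemberSubfamily_subset_powersetCard hQ) fun h =>
        hno (h.mono (subset_insert v V) (filter_subset _ _))
      have h₁ := ihk (memberSubfamily_subset_powersetCard hQ) fun h =>
        hno (h.of_memberSubfamily hv)
      refine (expect_chaos_insert_pow_le hv (by positivity) (by positivity) h₀ h₁).trans ?_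
      have hcard : (#(Q.memberSubfamily v) + #(Q.nonMemberSubfamily v) : ℝ) = #Q := by
        exact_mod_cast card_memberSubfamily_add_card_nonMemberSubfamily v Q
      have hpow : (#V : ℝ) ^ (k + 2) + #V ^ (k + 1) ≤ #(insert v V) ^ (k + 2) :=
        calc (#V : ℝ) ^ (k + 2) + #V ^ (k + 1) = #V ^ (k + 1) * (#V + 1) := by ring
          _ ≤ (#V + 1) ^ (k + 1) * (#V + 1) := by gcongr; linarith
          _ = #(insert v V) ^ (k + 2) := by
            rw [card_insert_of_notMem hv, Nat.cast_succ, ← pow_succ]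
      gcongr
      calc _ = (8 * p) ^ (k + 1) * (θ * (#(Q.memberSubfamily v) + #(Q.nonMemberSubfamily v)) +
              γ * (#V ^ (k + 2) + #V ^ (k + 1))) := by ring
        _ ≤ _ := by rw [hcard]; gcongr

end Slicing

section Energy

variable {ι α : Type*} [Fintype ι] [DecidableEq α] {V : Finset α}

@[to_additive]
lemma prod_prod_eq_prod_pow_card {M : Type*} [CommMonoid M] {f : ι → Finset α}
    (hf : ∀ i, f i ⊆ V) (g : α → M) :
    ∏ i, ∏ v ∈ f i, g v = ∏ v ∈ V, g v ^ #{i | v ∈ f i} := by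
  rw [prod_comm' (t' := V) (s' := fun v => {i | v ∈ f i})]
  · simp only [prod_const]
  · simpa using fun i v hv => hf i hv

lemma chaos_pow_card [DecidableEq ι] (Q : Finset (Finset α)) (S : Finset α) :
    chaos Q S ^ Fintype.card ι =
      ∑ f ∈ Fintype.piFinset fun _ : ι => Q, ∏ i, ∏ v ∈ f i, rademacher S v := by
  rw [chaos, ← card_univ, ← prod_const, prod_univ_sum]

lemma expect_prod_prod_rademacher_nonneg {f : ι → Finset α} (hf : ∀ i, f i ⊆ V) :
    0 ≤ 𝔼 S ∈ V.powerset, ∏ i, ∏ v ∈ f i, rademacher S v := by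
  simp only [prod_prod_eq_prod_pow_card hf]
  exact expect_prod_rademacher_pow_nonneg V _

variable {G : Type*} [AddCommGroup G] [Module (ZMod 2) G] {Λ : Finset G}

lemma InLambdaFamily.even_of_sum_smul_eq_zero {k : ℕ} (hΛ : InLambdaFamily k Λ) {m : G → ℕ}
    (hm : ∑ v ∈ Λ, m v ≤ k) (h0 : ∑ v ∈ Λ, m v • v = 0) : ∀ v ∈ Λ, Even (m v) := by
  have hsmul : ∀ v, m v • v = if ¬Even (m v) then v else 0 := fun v => by
    split_ifs with hv
    · obtain ⟨j, hj⟩ := hv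
      rw [hj, ← two_mul, mul_comm, mul_smul, two_smul, ZModModule.add_self, smul_zero]
    · obtain ⟨j, hj⟩ := Nat.not_even_iff_odd.1 hv
      rw [hj, add_smul, mul_comm, mul_smul, two_smul, ZModModule.add_self, smul_zero, zero_add,
        one_smul]
  have hodd : ∑ v ∈ Λ with ¬Even (m v), v = 0 := by
    rw [sum_filter]
    exact (sum_congr rfl fun v _ => (hsmul v).symm).trans h0
  have hcard : #{v ∈ Λ | ¬Even (m v)} ≤ k :=
    calc #{v ∈ Λ | ¬Even (m v)} ≤ ∑ v ∈ Λ with ¬Even (m v), m v := by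
          rw [card_eq_sum_ones]
          exact sum_le_sum fun v hv => (Nat.not_even_iff_odd.1 (mem_filter.1 hv).2).pos
      _ ≤ ∑ v ∈ Λ, m v := sum_le_sum_of_subset (filter_subset _ _)
      _ ≤ k := hm
  by_contra! hne
  exact hΛ _ (filter_subset _ _) (filter_nonempty_iff.2 hne) hcard hodd

variable [DecidableEq G] {d p : ℕ}

lemma InLambdaFamily.expect_prod_prod_rademacher_eq_one {f : ι → Finset G}
    (hΛ : InLambdaFamily (Fintype.card ι * d) Λ) (hf : ∀ i, f i ∈ Λ.powersetCard d)
    (h0 : ∑ i, ∑ v ∈ f i, v = 0) :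
    𝔼 S ∈ Λ.powerset, ∏ i, ∏ v ∈ f i, rademacher S v = 1 := by
  have hsub : ∀ i, f i ⊆ Λ := fun i => (mem_powersetCard.1 (hf i)).1
  simp only [prod_prod_eq_prod_pow_card hsub]
  refine expect_prod_rademacher_pow_eq_one (hΛ.even_of_sum_smul_eq_zero ?_ ?_)
  · have hcount := sum_sum_eq_sum_nsmul_card hsub fun _ => 1
    simp only [sum_const, smul_eq_mul, mul_one, (mem_powersetCard.1 (hf _)).2, card_univ]
      at hcount
    exact hcount.ge
  · rw [← sum_sum_eq_sum_nsmul_card hsub, h0]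

lemma addEnergy_image_sum_le (Q : Finset (Finset G)) (p : ℕ) :
    addEnergy p (Q.image fun e => ∑ v ∈ e, v) ≤
      #{f ∈ Fintype.piFinset fun _ : Fin p ⊕ Fin p => Q | ∑ i, ∑ v ∈ f i, v = 0} := by
  refine card_le_card_of_surjOn
    (fun f => (fun i => ∑ v ∈ f (.inl i), v, fun i => ∑ v ∈ f (.inr i), v)) ?_
  rintro ⟨a, b⟩ hab
  simp only [coe_filter, mem_product, Fintype.mem_piFinset, mem_image, Set.mem_ofPred_eq] at hab
  obtain ⟨⟨ha, hb⟩, heq⟩ := hab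
  choose a' ha' ha using ha
  choose b' hb' hb using hb
  refine ⟨Sum.elim a' b', ?_, by simp [ha, hb]⟩
  simp [ha', hb', ha, hb, heq, ZModModule.add_self]

lemma InLambdaFamily.addEnergy_le_expect_chaos_pow (hΛ : InLambdaFamily (2 * d * p) Λ)
    {Q : Finset (Finset G)} (hQ : Q ⊆ Λ.powersetCard d) :
    (addEnergy p (Q.image fun e => ∑ v ∈ e, v) : ℝ) ≤
      𝔼 S ∈ Λ.powerset, chaos Q S ^ (2 * p) := by
  have hι : Fintype.card (Fin p ⊕ Fin p) = 2 * p := by simp [two_mul]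
  have hmem : ∀ f ∈ Fintype.piFinset fun _ : Fin p ⊕ Fin p => Q, ∀ i, f i ∈ Λ.powersetCard d :=
    fun f hf i => hQ (Fintype.mem_piFinset.1 hf i)
  calc (addEnergy p (Q.image fun e => ∑ v ∈ e, v) : ℝ)
      ≤ #{f ∈ Fintype.piFinset fun _ : Fin p ⊕ Fin p => Q | ∑ i, ∑ v ∈ f i, v = 0} :=
        Nat.cast_le.2 (addEnergy_image_sum_le Q p)
    _ = ∑ f ∈ Fintype.piFinset fun _ : Fin p ⊕ Fin p => Q with ∑ i, ∑ v ∈ f i, v = 0,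
          𝔼 S ∈ Λ.powerset, ∏ i, ∏ v ∈ f i, rademacher S v := by
        rw [card_eq_sum_ones, Nat.cast_sum, Nat.cast_one]
        refine sum_congr rfl fun f hf => Eq.symm ?_
        obtain ⟨hf, h0⟩ := mem_filter.1 hf
        exact InLambdaFamily.expect_prod_prod_rademacher_eq_one
          (by rwa [hι, mul_right_comm]) (hmem f hf) h0
    _ ≤ ∑ f ∈ Fintype.piFinset fun _ : Fin p ⊕ Fin p => Q,
          𝔼 S ∈ Λ.powerset, ∏ i, ∏ v ∈ f i, rademacher S v :=
        sum_le_sum_of_subset_of_nonneg (filter_subset _ _) fun f hf _ =>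
          expect_prod_prod_rademacher_nonneg fun i => (mem_powersetCard.1 (hmem f hf i)).1
    _ = 𝔼 S ∈ Λ.powerset, chaos Q S ^ (2 * p) := by
        simp only [← hι, chaos_pow_card, expect_sum_comm]

end Energy

section StructureInEnergyRichSets

variable {α : Type*} [DecidableEq α] {V : Finset α} {Q : Finset (Finset α)} {k s t : ℕ}

lemma expect_chaos_pow_le_of_not_hasBiclique {ρ Γ : ℝ} (hQ : Q ⊆ V.powersetCard (k + 2))
    (hρ0 : 0 ≤ ρ) (hρ1 : ρ ≤ 1) (hΓ : 0 ≤ Γ) (hs : 4 * s ≤ ρ ^ 4 * Γ)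
    (ht : t ≤ (ρ ^ 2 / 4) ^ s * (ρ ^ 2 * Γ / 2)) (hno : ¬HasBiclique V Q k s t) (p : ℕ) :
    𝔼 S ∈ V.powerset, chaos Q S ^ (2 * p) ≤ ((8 * p) ^ k *
      ((32 * p + 512 * p ^ 2 * ρ) * #Q + 512 * p ^ 2 * Γ * #V ^ (k + 1))) ^ p :=
  expect_chaos_pow_le_of_graph (by positivity) (by positivity)
    (fun _ _ hG hno => expect_chaos_graph_pow_le hG hρ0 hρ1 hΓ hs ht hno p) hQ hno

lemma four_mul_le_inv_pow_four_mul {B : ℝ} (hB : 1 ≤ B) (s t : ℕ) :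
    4 * s ≤ (1 / B) ^ 4 * ((2 * B) ^ (2 * s + 2) * (s + t)) := by
  rcases s.eq_zero_or_pos with rfl | hs
  · rw [Nat.cast_zero, mul_zero]
    positivity
  · rw [one_div, inv_pow, ← div_eq_inv_mul, le_div_iff₀ (by positivity)]
    calc 4 * (s : ℝ) * B ^ 4 ≤ (2 * B) ^ 4 * (s + t) := by
          rw [mul_pow, mul_right_comm]
          gcongr <;> norm_num
      _ ≤ (2 * B) ^ (2 * s + 2) * (s + t) := by gcongr <;> [linarith; omega]

lemma le_inv_sq_div_four_pow_mul {B : ℝ} (hB : 0 < B) (s t : ℕ) :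
    t ≤ ((1 / B) ^ 2 / 4) ^ s * ((1 / B) ^ 2 * ((2 * B) ^ (2 * s + 2) * (s + t)) / 2) := by
  have hcancel : ((1 / B) ^ 2 / 4) ^ s * ((1 / B) ^ 2 * ((2 * B) ^ (2 * s + 2) * (s + t)) / 2) =
      2 * ((s : ℝ) + t) := by
    rw [pow_add, pow_mul, show (1 / B) ^ 2 / 4 = 1 / (2 * B) ^ 2 by ring, one_div_pow]
    field_simp
  rw [hcancel]
  linarith [(Nat.cast_nonneg s : (0 : ℝ) ≤ s), (Nat.cast_nonneg t : (0 : ℝ) ≤ t)]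

lemma le_of_pow_mul_div_pow_le {B K p q Γ N : ℝ} (hK : 0 < K)
    (hB : B = 2 ^ 11 * 8 ^ k * K ^ (k + 1)) (hBp : B ≤ p) (hq : 0 ≤ q)
    (h : p ^ (k + 2) * q / K ^ (k + 1) ≤ (8 * p) ^ k *
      ((32 * p + 512 * p ^ 2 * (1 / B)) * q + 512 * p ^ 2 * Γ * N ^ (k + 1))) :
    q ≤ (1 / 64 + 1 / 4) * q + B / 4 * Γ * N ^ (k + 1) := by
  have hp : 0 < p := lt_of_lt_of_le (by rw [hB]; positivity) hBp
  rw [div_le_iff₀ (by positivity)] at h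
  have hscaled : p ^ (k + 2) * q ≤
      p ^ (k + 2) * ((B / p / 64 + 1 / 4) * q + B / 4 * Γ * N ^ (k + 1)) := by
    refine h.trans_eq ?_
    rw [hB]
    field_simp
    ring
  refine (le_of_mul_le_mul_left hscaled (by positivity)).trans ?_
  have hBp : B / p ≤ 1 := (div_le_one hp).2 hBp
  gcongr

lemma one_le_two_pow_mul_eight_pow_mul_pow {K : ℝ} (hK : 1 ≤ K) (k : ℕ) :
    1 ≤ 2 ^ 11 * 8 ^ k * K ^ (k + 1) :=
  one_le_mul_of_one_le_of_one_le
    (one_le_mul_of_one_le_of_one_le (by norm_num) (one_le_pow₀ (by norm_num))) (one_le_pow₀ hK)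

lemma hasBiclique_of_le_expect_chaos_pow {p : ℕ} {K B : ℝ} (hK : 1 ≤ K)
    (hB : B = 2 ^ 11 * 8 ^ k * K ^ (k + 1)) (hBp : B ≤ p) (hQ : Q ⊆ V.powersetCard (k + 2))
    (hcard : (2 * B) ^ (2 * s + 3) * (s + t) * #V ^ (k + 1) < #Q)
    (hmoment : (p ^ (k + 2) * #Q / K ^ (k + 1)) ^ p ≤
      𝔼 S ∈ V.powerset, chaos Q S ^ (2 * p)) :
    HasBiclique V Q k s t := by
  have hB1 : 1 ≤ B := hB ▸ one_le_two_pow_mul_eight_pow_mul_pow hK k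
  have hp : p ≠ 0 := (Nat.cast_pos.1 (zero_lt_one.trans_le (hB1.trans hBp))).ne'
  set Γ : ℝ := (2 * B) ^ (2 * s + 2) * (s + t) with hΓ
  by_contra hno
  have hupper := expect_chaos_pow_le_of_not_hasBiclique hQ (by positivity)
    ((div_le_one (by linarith)).2 hB1) (by positivity) (four_mul_le_inv_pow_four_mul hB1 s t)
    (le_inv_sq_div_four_pow_mul (by linarith) s t) hno p
  have hself : (#Q : ℝ) ≤ (1 / 64 + 1 / 4) * #Q + B / 4 * Γ * #V ^ (k + 1) :=
    le_of_pow_mul_div_pow_le (zero_lt_one.trans_le hK) hB hBp (Nat.cast_nonneg _)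
      (le_of_pow_le_pow_left₀ hp (by positivity) (hmoment.trans hupper))
  have hΓB : 2 * B * Γ = (2 * B) ^ (2 * s + 3) * (s + t) := by rw [hΓ]; ring
  rw [← hΓB] at hcard
  have : 0 ≤ B * Γ * #V ^ (k + 1) := by positivity
  linarith

variable {G : Type*} [AddCommGroup G] [DecidableEq G] {Λ : Finset G}

lemma HasBiclique.exists_sum_add_add_mem {Q : Finset (Finset G)} (h : HasBiclique Λ Q k s t) :
    ∃ (L L' : Finset G) (lam : Fin k → G), L ⊆ Λ ∧ L' ⊆ Λ ∧ (∀ i, lam i ∈ Λ) ∧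
      L ∩ L' = ∅ ∧ (∀ i, lam i ∉ L ∪ L') ∧ #L = s ∧ t ≤ #L' ∧
      ∀ x ∈ L, ∀ y ∈ L', ∑ i, lam i + x + y ∈ Q.image fun e => ∑ v ∈ e, v := by
  obtain ⟨T, hT, L, hL, L', hL', hTk, hLs, hLt, hTL, hLL, hQ⟩ := h
  let lam := (T.equivFinOfCardEq hTk).symm
  refine ⟨L, L', fun i => lam i, hL, hL', fun i => hT (lam i).2,
    disjoint_iff_inter_eq_empty.1 hLL, fun i => disjoint_left.1 hTL (lam i).2, hLs, hLt,
    fun x hx y hy => mem_image.2 ⟨T ∪ {x, y}, hQ x hx y hy, ?_⟩⟩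
  have hsum : ∑ i, (lam i : G) = ∑ v ∈ T, v := by
    rw [Equiv.sum_comp lam (fun v : T => (v : G)), sum_coe_sort T fun v => v]
  have hpair : ({x, y} : Finset G) ⊆ L ∪ L' :=
    insert_subset (mem_union_left _ hx) (singleton_subset_iff.2 (mem_union_right _ hy))
  rw [sum_union (disjoint_of_subset_right hpair hTL), sum_pair (disjoint_iff_ne.1 hLL x hx y hy),
    hsum, add_assoc]

lemma exists_subset_powersetCard_image_sum_eq {d : ℕ} {Q : Finset G} (hQ : Q ⊆ dDot d Λ) :
    ∃ E ⊆ Λ.powersetCard d, #E = #Q ∧ E.image (fun e => ∑ v ∈ e, v) = Q := by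
  obtain ⟨E, hE, hinj, him⟩ := exists_subset_injOn_image_eq_of_surjOn
    (Λ.powersetCard d : Set (Finset G)) Q (f := fun e => ∑ v ∈ e, v) fun q hq => by
      simpa [dDot] using hQ hq
  exact ⟨E, coe_subset.1 hE, by rw [← him, card_image_of_injOn hinj], him⟩

variable [Module (ZMod 2) G]

lemma exists_sum_add_add_mem_of_le_addEnergy {p : ℕ} {K B : ℝ} (hK : 1 ≤ K)
    (hB : B = 2 ^ 11 * 8 ^ k * K ^ (k + 1)) (hBp : B ≤ p)
    (hΛ : InLambdaFamily (2 * (k + 2) * p) Λ) {Q : Finset G} (hQ : Q ⊆ dDot (k + 2) Λ)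
    (hcard : (2 * B) ^ (2 * s + 3) * (s + t) * #Λ ^ (k + 1) < #Q)
    (hT : (p : ℝ) ^ ((k + 2) * p) * #Q ^ p / K ^ ((k + 1) * p) ≤ addEnergy p Q) :
    ∃ (L L' : Finset G) (lam : Fin k → G), L ⊆ Λ ∧ L' ⊆ Λ ∧ (∀ i, lam i ∈ Λ) ∧
      L ∩ L' = ∅ ∧ (∀ i, lam i ∉ L ∪ L') ∧ #L = s ∧ t ≤ #L' ∧
      ∀ x ∈ L, ∀ y ∈ L', ∑ i, lam i + x + y ∈ Q := by
  obtain ⟨E, hE, hEcard, rfl⟩ := exists_subset_powersetCard_image_sum_eq hQ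
  rw [← hEcard] at hcard hT
  refine (hasBiclique_of_le_expect_chaos_pow hK hB hBp hE hcard ?_).exists_sum_add_add_mem
  rw [div_pow, mul_pow, ← pow_mul, ← pow_mul]
  exact hT.trans (hΛ.addEnergy_le_expect_chaos_pow hE)

end StructureInEnergyRichSets

section Parameters

lemma rpow_logb_mul_le {A E X c : ℝ} (hA : 0 ≤ A) (hAE : A ≤ E) (hE : 1 < E) (hX : 1 ≤ X)
    (hc : 0 ≤ c) : A ^ (Real.logb E X * c) ≤ X ^ c := by
  have hlog : 0 ≤ Real.logb E X := Real.logb_nonneg hE hX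
  calc A ^ (Real.logb E X * c) ≤ E ^ (Real.logb E X * c) := by gcongr
    _ = X ^ c := by
        rw [Real.rpow_mul (by linarith), Real.rpow_logb (by linarith) hE.ne' (by linarith)]

lemma pow_two_mul_ceil_add_three_le {A E X : ℝ} (hA : 1 ≤ A) (hAE : A ≤ E) (hE : 1 < E)
    (hX : 1 ≤ X) :
    A ^ (2 * ⌈Real.logb 2 X / (2 ^ 10 * Real.logb 2 E)⌉₊ + 3) ≤ A ^ 5 * X ^ (8 : ℝ)⁻¹ := by
  set y := Real.logb 2 X / (2 ^ 10 * Real.logb 2 E) with hy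
  have hlX : 0 ≤ Real.logb 2 X := Real.logb_nonneg one_lt_two hX
  have hlE : 0 ≤ Real.logb 2 E := Real.logb_nonneg one_lt_two hE.le
  have hceil : (⌈y⌉₊ : ℝ) ≤ y + 1 := (Nat.ceil_lt_add_one (by positivity)).le
  have hy' : 2 * y = Real.logb E X * 512⁻¹ := by
    have h2 : Real.log 2 ≠ 0 := (Real.log_pos one_lt_two).ne'
    have hEne : Real.log E ≠ 0 := (Real.log_pos hE).ne'
    rw [hy, Real.logb, Real.logb, Real.logb]
    field_simp
    ring
  calc A ^ (2 * ⌈y⌉₊ + 3) = A ^ ((2 * ⌈y⌉₊ + 3 : ℕ) : ℝ) := (Real.rpow_natCast _ _).symm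
    _ ≤ A ^ ((5 : ℕ) + 2 * y) :=
        Real.rpow_le_rpow_of_exponent_le hA (by push_cast; linarith)
    _ = A ^ 5 * A ^ (2 * y) := by rw [Real.rpow_add (by linarith), Real.rpow_natCast]
    _ ≤ A ^ 5 * X ^ (512 : ℝ)⁻¹ := by
        rw [hy']
        gcongr
        exact rpow_logb_mul_le (by linarith) hAE hE hX (by norm_num)
    _ ≤ A ^ 5 * X ^ (8 : ℝ)⁻¹ := by gcongr; norm_num

lemma logb_two_le_three_mul_rpow_half {X : ℝ} (hX : 0 ≤ X) :
    Real.logb 2 X ≤ 3 * X ^ (2 : ℝ)⁻¹ := by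
  have hlog := Real.log_le_rpow_div hX (show (0 : ℝ) < 2⁻¹ by norm_num)
  have hpow : 0 ≤ X ^ (2 : ℝ)⁻¹ := by positivity
  rw [div_inv_eq_mul] at hlog
  rw [Real.logb, div_le_iff₀ (Real.log_pos one_lt_two)]
  nlinarith [Real.log_two_gt_d9]

lemma ceil_logb_div_add_ceil_mul_rpow_le {X a c η : ℝ} (hX : 1 ≤ X) (ha : 1 ≤ a) (hc₀ : 0 ≤ c)
    (hc : c ≤ 1) (hη : η ≤ 1 / 2) :
    (⌈Real.logb 2 X / a⌉₊ + ⌈c * X ^ η⌉₊ : ℝ) ≤ 6 * X ^ (2 : ℝ)⁻¹ := by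
  have hlX : 0 ≤ Real.logb 2 X := Real.logb_nonneg one_lt_two hX
  have h1 : 1 ≤ X ^ (2 : ℝ)⁻¹ := Real.one_le_rpow hX (by norm_num)
  have hs : Real.logb 2 X / a ≤ 3 * X ^ (2 : ℝ)⁻¹ :=
    (div_le_self hlX ha).trans (logb_two_le_three_mul_rpow_half (by linarith))
  have ht : c * X ^ η ≤ X ^ (2 : ℝ)⁻¹ :=
    (mul_le_of_le_one_left (by positivity) hc).trans <|
      Real.rpow_le_rpow_of_exponent_le hX (by simpa using hη)
  linarith [Nat.ceil_lt_add_one (a := Real.logb 2 X / a) (by positivity),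
    Nat.ceil_lt_add_one (a := c * X ^ η) (by positivity)]

lemma le_rpow_inv_natCast_of_pow_le {x X : ℝ} {m : ℕ} (hx : 0 ≤ x) (hm : m ≠ 0)
    (h : x ^ m ≤ X) : x ≤ X ^ (m : ℝ)⁻¹ := by
  rw [← Real.pow_rpow_inv_natCast hx hm]
  gcongr

lemma pow_self_le_rpow_inv_eight {p d : ℕ} {X : ℝ} (hdp : d ^ 2 ≤ p)
    (hX : (p : ℝ) ^ (4 * d) ≤ X) : (d : ℝ) ^ d ≤ X ^ (8 : ℝ)⁻¹ := by
  have hdX : ((d : ℝ) ^ d) ^ 8 ≤ X := calc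
    ((d : ℝ) ^ d) ^ 8 = ((d ^ 2 : ℕ) : ℝ) ^ (4 * d) := by push_cast; ring
    _ ≤ (p : ℝ) ^ (4 * d) := by gcongr
    _ ≤ X := hX
  simpa only [Nat.cast_ofNat] using
    le_rpow_inv_natCast_of_pow_le (by positivity) (by norm_num) hdX

lemma sq_le_rpow_inv_four {p X : ℝ} {d : ℕ} (hp : 1 ≤ p) (hd : 2 ≤ d)
    (hX : p ^ (4 * d) ≤ X) : p ^ 2 ≤ X ^ (4 : ℝ)⁻¹ := by
  have hpX : (p ^ 2) ^ 4 ≤ X := calc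
    (p ^ 2) ^ 4 = p ^ (4 * 2) := by ring
    _ ≤ p ^ (4 * d) := pow_le_pow_right₀ hp (by omega)
    _ ≤ X := hX
  simpa only [Nat.cast_ofNat] using
    le_rpow_inv_natCast_of_pow_le (by positivity) (by norm_num) hpX

lemma pow_ceil_mul_ceil_add_ceil_mul_pow_self_lt {A E C η X : ℝ} {p d s t : ℕ} (hA : 1 ≤ A)
    (hAE : A ≤ E) (hE : 2 ≤ E) (hC : A ^ 5 * 6 < C * p ^ 2) (hη : η ≤ 1 / 2) (hd : 2 ≤ d)
    (hdp : d ^ 2 ≤ p) (hX : (p : ℝ) ^ (4 * d) ≤ X)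
    (hs : s = ⌈Real.logb 2 X / (2 ^ 10 * Real.logb 2 E)⌉₊)
    (ht : t = ⌈1 / (2 ^ 10 * (p : ℝ) ^ 2) * X ^ η⌉₊) :
    A ^ (2 * s + 3) * (s + t) * (d : ℝ) ^ d < C * X := by
  have hp : (1 : ℝ) ≤ p := mod_cast (Nat.pow_pos (by omega)).trans_le hdp
  have hX1 : 1 ≤ X := (one_le_pow₀ hp).trans hX
  have hX0 : 0 < X := by linarith
  have hC0 : 0 ≤ C := (pos_of_mul_pos_left (hC.trans' (by positivity)) (by positivity)).le
  have hlE : 1 ≤ Real.logb 2 E := by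
    rwa [Real.le_logb_iff_rpow_le one_lt_two (by linarith), Real.rpow_one]
  have hAs : A ^ (2 * s + 3) ≤ A ^ 5 * X ^ (8 : ℝ)⁻¹ :=
    hs ▸ pow_two_mul_ceil_add_three_le hA hAE (by linarith) hX1
  have hst : (s + t : ℝ) ≤ 6 * X ^ (2 : ℝ)⁻¹ := by
    rw [hs, ht]
    refine ceil_logb_div_add_ceil_mul_rpow_le hX1 (by linarith) (by positivity) ?_ hη
    exact (div_le_one (by positivity)).2 (by linarith [one_le_pow₀ hp (n := 2)])
  set Z : ℝ := X ^ (8 : ℝ)⁻¹ * X ^ (2 : ℝ)⁻¹ * X ^ (8 : ℝ)⁻¹ with hZ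
  calc A ^ (2 * s + 3) * (s + t) * (d : ℝ) ^ d
      ≤ A ^ 5 * X ^ (8 : ℝ)⁻¹ * (6 * X ^ (2 : ℝ)⁻¹) * X ^ (8 : ℝ)⁻¹ := by
        gcongr
        exact pow_self_le_rpow_inv_eight hdp hX
    _ = A ^ 5 * 6 * Z := by ring
    _ < C * (p : ℝ) ^ 2 * Z := mul_lt_mul_of_pos_right hC (by positivity)
    _ ≤ C * X ^ (4 : ℝ)⁻¹ * Z := by
        gcongr
        exact sq_le_rpow_inv_four hp hd hX
    _ = C * X := by
        rw [hZ, mul_assoc, ← Real.rpow_add hX0, ← Real.rpow_add hX0, ← Real.rpow_add hX0]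
        norm_num

lemma two_mul_pow_five_mul_six_lt {K p : ℝ} {k : ℕ} (hK : 1 ≤ K)
    (hpK : 2 ^ (50 + 8 * (k + 2)) * K ^ (k + 2) ≤ p) :
    (2 * (2 ^ 11 * 8 ^ k * K ^ (k + 1))) ^ 5 * 6 <
      2 ^ (140 + 80 * (k + 2)) * K ^ (3 * (k + 2)) * p ^ 2 := by
  have hp : K ^ (2 * (k + 2)) ≤ p ^ 2 := by
    rw [mul_comm, pow_mul]
    gcongr
    exact (le_mul_of_one_le_left (by positivity) (one_le_pow₀ one_le_two)).trans hpK
  calc (2 * (2 ^ 11 * 8 ^ k * K ^ (k + 1))) ^ 5 * 6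
      = 6 * 2 ^ (60 + 15 * k) * K ^ (5 * (k + 1)) := by
        rw [show (8 : ℝ) = 2 ^ 3 by norm_num, ← pow_mul]; ring
    _ < 2 ^ 3 * 2 ^ (60 + 15 * k) * K ^ (5 * (k + 1)) := by gcongr; norm_num
    _ = 2 ^ (63 + 15 * k) * K ^ (5 * (k + 1)) := by ring
    _ ≤ 2 ^ (140 + 80 * (k + 2)) * K ^ (3 * (k + 2) + 2 * (k + 2)) := by
        gcongr <;> first | exact one_le_two | exact hK | omega
    _ ≤ 2 ^ (140 + 80 * (k + 2)) * K ^ (3 * (k + 2)) * p ^ 2 := by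
        rw [pow_add K, ← mul_assoc]; gcongr

lemma two_mul_two_pow_mul_le {K : ℝ} (hK : 1 ≤ K) (k : ℕ) :
    2 * (2 ^ 11 * 8 ^ k * K ^ (k + 1)) ≤ 2 ^ 40 * 8 ^ (k + 2) * K ^ (k + 2) := by
  calc 2 * (2 ^ 11 * 8 ^ k * K ^ (k + 1)) = 2 ^ 12 * 8 ^ k * K ^ (k + 1) := by ring
    _ ≤ 2 ^ 40 * 8 ^ (k + 2) * K ^ (k + 2) := by gcongr <;> norm_num [hK]

lemma two_pow_mul_eight_pow_mul_pow_le {K : ℝ} (hK : 1 ≤ K) (k : ℕ) :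
    2 ^ 11 * 8 ^ k * K ^ (k + 1) ≤ 2 ^ (50 + 8 * (k + 2)) * K ^ (k + 2) := by
  have h8 : (8 : ℝ) ^ k = 2 ^ (3 * k) := by rw [pow_mul]; norm_num
  rw [h8, ← pow_add]
  gcongr <;> first | exact one_le_two | exact hK | omega

lemma sq_le_two_pow_mul_pow {d : ℕ} {K : ℝ} (hK : 1 ≤ K) :
    (d : ℝ) ^ 2 ≤ 2 ^ (50 + 8 * d) * K ^ d := by
  have hd : (d : ℝ) ≤ 2 ^ d := mod_cast Nat.lt_two_pow_self.le
  calc (d : ℝ) ^ 2 ≤ (2 ^ d) ^ 2 := by gcongr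
    _ = 2 ^ (d * 2) := (pow_mul _ _ _).symm
    _ ≤ 2 ^ (50 + 8 * d) := pow_le_pow_right₀ one_le_two (by omega)
    _ ≤ 2 ^ (50 + 8 * d) * K ^ d := le_mul_of_one_le_right (by positivity) (one_le_pow₀ hK)

lemma mul_lt_of_mul_lt_mul_div {a q C D N : ℝ} (ha : 0 ≤ a) (hC : 0 < C) (hD : 0 < D)
    (hN : 0 ≤ N) (h : a * D < C * (q * D / (C * N))) : a * N < q := by
  rw [← mul_div_assoc, mul_div_mul_left _ _ hC.ne'] at h
  obtain rfl | hN := hN.eq_or_lt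
  · rw [div_zero] at h
    exact absurd h (mul_nonneg ha hD.le).not_gt
  · rw [lt_div_iff₀ hN, mul_right_comm] at h
    exact lt_of_mul_lt_mul_right h hD.le

end Parameters

section FinalParameters

variable {K η : ℝ} {p d : ℕ}

lemma four_mul_le_mul_of_two_pow_mul_pow_div_le (hK : 1 ≤ K) (hη : 0 < η)
    (hpK : 2 ^ (50 + 8 * d) * K ^ d / η ≤ (p : ℝ)) : 4 * d ≤ η * p := by
  have hd : (d : ℝ) ≤ 2 ^ d := mod_cast Nat.lt_two_pow_self.le
  calc (4 * d : ℝ) ≤ 4 * 2 ^ d := by gcongr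
    _ = 2 ^ (2 + d) := by ring
    _ ≤ 2 ^ (50 + 8 * d) := pow_le_pow_right₀ one_le_two (by omega)
    _ ≤ 2 ^ (50 + 8 * d) * K ^ d := le_mul_of_one_le_right (by positivity) (one_le_pow₀ hK)
    _ ≤ η * p := (div_le_iff₀' hη).1 hpK

lemma pow_four_mul_le_rpow_mul_rpow_mul_logb {A N : ℝ} (hA : 1 ≤ A) (hη : 0 ≤ η)
    (hp : 1 ≤ p) (hdp : 4 * d ≤ η * p) (hN : 2 ≤ N) :
    (p : ℝ) ^ (4 * d) ≤ (A * p) ^ (η * p) * N ^ η * Real.logb 2 N := by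
  have hp' : (1 : ℝ) ≤ p := mod_cast hp
  have hNη : 1 ≤ N ^ η := Real.one_le_rpow (by linarith) hη
  have hlog : 1 ≤ Real.logb 2 N := by
    rwa [Real.le_logb_iff_rpow_le one_lt_two (by linarith), Real.rpow_one]
  calc (p : ℝ) ^ (4 * d) = (p : ℝ) ^ ((4 * d : ℕ) : ℝ) := (Real.rpow_natCast _ _).symm
    _ ≤ (p : ℝ) ^ (η * p) := Real.rpow_le_rpow_of_exponent_le hp' (by push_cast; exact hdp)
    _ ≤ (A * p) ^ (η * p) := by
        gcongr
        exact le_mul_of_one_le_left (by positivity) hA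
    _ ≤ (A * p) ^ (η * p) * N ^ η * Real.logb 2 N := by
        rw [mul_assoc]
        exact le_mul_of_one_le_right (by positivity) (one_le_mul_of_one_le_of_one_le hNη hlog)

lemma two_pow_mul_pow_le_pow_seventeen (hK : 1 ≤ K) (hd : 2 ≤ d) :
    2 ^ (80 + 30 * d) * K ^ d ≤ (2 ^ 13 * (8 * K) ^ (d - 1)) ^ 17 := by
  obtain ⟨k, rfl⟩ := Nat.exists_eq_add_of_le' hd
  have h2 : (2 : ℝ) ^ (80 + 30 * (k + 2)) ≤ 2 ^ ((13 + 3 * (k + 1)) * 17) :=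
    pow_le_pow_right₀ one_le_two (by omega)
  have hKk : K ^ (k + 2) ≤ K ^ ((k + 1) * 17) := pow_le_pow_right₀ hK (by omega)
  calc 2 ^ (80 + 30 * (k + 2)) * K ^ (k + 2)
      ≤ 2 ^ ((13 + 3 * (k + 1)) * 17) * K ^ ((k + 1) * 17) := by gcongr
    _ = (2 ^ 13 * ((2 ^ 3) ^ (k + 1) * K ^ (k + 1))) ^ 17 := by
        rw [pow_mul, pow_mul K, ← mul_pow, pow_add, pow_mul, mul_assoc]
    _ = (2 ^ 13 * (8 * K) ^ (k + 1)) ^ 17 := by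
        rw [← mul_pow (2 ^ 3) K, show (2 : ℝ) ^ 3 = 8 by norm_num]

lemma pow_four_mul_le_div {q R S N : ℝ} (hK : 1 ≤ K) (hη : 0 < η) (hp : 1 ≤ p) (hN : 0 < N)
    (hR : 2 ^ (80 + 30 * d) * K ^ d ≤ R) (hS : (p : ℝ) ^ (4 * d) ≤ S)
    (hq : (2 : ℝ) ^ ((60 + 50 * d : ℝ) + 2 / η) * R * K ^ (2 * d) * (p : ℝ) ^ 3 *
      ((d : ℝ) ^ d)⁻¹ * N ^ (d - 1) * S ≤ q) :
    (p : ℝ) ^ (4 * d) ≤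
      q * (d : ℝ) ^ d / (2 ^ (140 + 80 * d) * K ^ (3 * d) * N ^ (d - 1)) := by
  have hp3 : (1 : ℝ) ≤ (p : ℝ) ^ 3 := one_le_pow₀ (mod_cast hp)
  have hR₀ : 0 ≤ R := hR.trans' (by positivity)
  have hd : 0 < (d : ℝ) ^ d := mod_cast d.pow_self_pos
  have h2 : (2 : ℝ) ^ (60 + 50 * d) ≤ 2 ^ ((60 + 50 * d : ℝ) + 2 / η) := by
    rw [← Real.rpow_natCast]
    refine Real.rpow_le_rpow_of_exponent_le one_le_two ?_
    push_cast
    linarith [show 0 < 2 / η by positivity]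
  rw [le_div_iff₀ (by positivity)]
  calc (p : ℝ) ^ (4 * d) * (2 ^ (140 + 80 * d) * K ^ (3 * d) * N ^ (d - 1))
      = 2 ^ (60 + 50 * d) * (2 ^ (80 + 30 * d) * K ^ d) * K ^ (2 * d) * 1 *
          ((d : ℝ) ^ d)⁻¹ * N ^ (d - 1) * (p : ℝ) ^ (4 * d) * (d : ℝ) ^ d := by
        field_simp
        ring
    _ ≤ 2 ^ ((60 + 50 * d : ℝ) + 2 / η) * R * K ^ (2 * d) * (p : ℝ) ^ 3 *
          ((d : ℝ) ^ d)⁻¹ * N ^ (d - 1) * S * (d : ℝ) ^ d := by gcongr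
    _ ≤ q * (d : ℝ) ^ d := by gcongr

lemma pow_four_mul_le_div_of_mul_max_le {q N M Z : ℝ} (hK : 1 ≤ K) (hη : 0 < η) (hp : 1 ≤ p)
    (hd : 2 ≤ d) (hN : 2 ≤ N) (hpK : 2 ^ (50 + 8 * d) * K ^ d / η ≤ (p : ℝ))
    (hM : M = 2 ^ 13 * (8 * K) ^ (d - 1))
    (hq : (2 : ℝ) ^ ((60 + 50 * d : ℝ) + 2 / η) * M ^ 17 * K ^ (2 * d) * (p : ℝ) ^ 3 *
      ((d : ℝ) ^ d)⁻¹ * N ^ (d - 1) *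
        max ((2 ^ 30 * M ^ 11 * p) ^ (η * p) * N ^ η * Real.logb 2 N) Z ≤ q) :
    (p : ℝ) ^ (4 * d) ≤
      q * (d : ℝ) ^ d / (2 ^ (140 + 80 * d) * K ^ (3 * d) * N ^ (d - 1)) := by
  have hM1 : 1 ≤ M :=
    hM ▸ one_le_mul_of_one_le_of_one_le (by norm_num) (one_le_pow₀ (by linarith))
  have hA : 1 ≤ 2 ^ 30 * M ^ 11 := one_le_mul_of_one_le_of_one_le (by norm_num) (one_le_pow₀ hM1)
  have hmax := pow_four_mul_le_rpow_mul_rpow_mul_logb hA hη.le hp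
    (four_mul_le_mul_of_two_pow_mul_pow_div_le hK hη hpK) hN
  exact pow_four_mul_le_div hK hη hp (by linarith)
    (hM ▸ two_pow_mul_pow_le_pow_seventeen hK hd) (hmax.trans (le_max_left _ _)) hq

end FinalParameters

theorem stmt17_general {G : Type*} [AddCommGroup G] [DecidableEq G] [Module (ZMod 2) G]
    {K η : ℝ} (hK : 1 ≤ K) (hη : η ≤ 1 / 2) {p d : ℕ} (hd : 2 ≤ d) {Λ Q : Finset G}
    (hΛ : InLambdaFamily (2 * d * p) Λ) (hQ : Q ⊆ dDot d Λ)
    (hpK : 2 ^ (50 + 8 * d) * K ^ d ≤ (p : ℝ))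
    (hT : (p : ℝ) ^ (d * p) * #Q ^ p / K ^ ((d - 1) * p) ≤ addEnergy p Q)
    (hX : (p : ℝ) ^ (4 * d) ≤
      #Q * (d : ℝ) ^ d / (2 ^ (140 + 80 * d) * K ^ (3 * d) * #Λ ^ (d - 1))) :
    ∃ (L L' : Finset G) (lam : Fin (d - 2) → G),
      L ⊆ Λ ∧ L' ⊆ Λ ∧ (∀ i, lam i ∈ Λ) ∧ L ∩ L' = ∅ ∧ (∀ i, lam i ∉ L ∪ L') ∧
      Real.logb 2 (#Q * (d : ℝ) ^ d / (2 ^ (140 + 80 * d) * K ^ (3 * d) * #Λ ^ (d - 1))) /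
        (2 ^ 10 * Real.logb 2 (2 ^ 40 * 8 ^ d * K ^ d)) ≤ #L ∧
      (1 / (2 ^ 10 * (p : ℝ) ^ 2)) *
        (#Q * (d : ℝ) ^ d / (2 ^ (140 + 80 * d) * K ^ (3 * d) * #Λ ^ (d - 1))) ^ η ≤ #L' ∧
      ∀ x ∈ L, ∀ y ∈ L', ∑ i, lam i + x + y ∈ Q := by
  obtain ⟨k, rfl⟩ := Nat.exists_eq_add_of_le' hd
  have hA : 2 ≤ 2 * (2 ^ 11 * 8 ^ k * K ^ (k + 1)) :=
    le_mul_of_one_le_right zero_le_two (one_le_two_pow_mul_eight_pow_mul_pow hK k)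
  have hAE := two_mul_two_pow_mul_le hK k
  have hnum := pow_ceil_mul_ceil_add_ceil_mul_pow_self_lt (one_le_two.trans hA) hAE (hA.trans hAE)
    (two_mul_pow_five_mul_six_lt hK hpK) hη hd
    (mod_cast (sq_le_two_pow_mul_pow hK).trans hpK) hX rfl rfl
  have hcard := mul_lt_of_mul_lt_mul_div (by positivity) (by positivity)
    (mod_cast (k + 2).pow_self_pos) (by positivity) hnum
  obtain ⟨L, L', lam, hL, hL', hlam, hLL', hlam', hLs, hLt, hmem⟩ :=
    exists_sum_add_add_mem_of_le_addEnergy hK rfl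
      ((two_pow_mul_eight_pow_mul_pow_le hK k).trans hpK) hΛ hQ hcard hT
  exact ⟨L, L', lam, hL, hL', hlam, hLL', hlam', hLs ▸ Nat.le_ceil _,
    (Nat.le_ceil _).trans (Nat.cast_le.2 hLt), hmem⟩

theorem stmt17 {n : ℕ} (K η : ℝ) (hK : 1 ≤ K) (hη0 : 0 < η) (hη : η ≤ 1 / 2)
    (p d : ℕ) (hp : 0 < p) (hd : 3 ≤ d)
    (Λ : Finset (Fin n → ZMod 2)) (hΛ : InLambdaFamily (2 * d * p) Λ)
    (Q : Finset (Fin n → ZMod 2)) (hQ : Q ⊆ dDot d Λ)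
    (hΛcard : 8 * d ^ 2 ≤ Λ.card)
    (hpK : 2 ^ (50 + 8 * d) * K ^ d / η ≤ (p : ℝ))
    (hT : (p : ℝ) ^ (d * p) * (Q.card : ℝ) ^ p / K ^ ((d - 1) * p) ≤
      (addEnergy p Q : ℝ))
    (M : ℝ) (hM : M = 2 ^ 13 * (8 * K) ^ (d - 1))
    (hplog : (p : ℝ) ≤ Real.logb 2 (Λ.card : ℝ) /
      Real.logb 2 (Real.logb 2 (Λ.card : ℝ)))
    (hQcard : (2 : ℝ) ^ ((60 + 50 * d : ℝ) + 2 / η) * M ^ 17 * K ^ (2 * d) *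
        (p : ℝ) ^ 3 * ((d : ℝ) ^ d)⁻¹ * (Λ.card : ℝ) ^ (d - 1) *
        max ((2 ^ 30 * M ^ 11 * p) ^ (η * p) * (Λ.card : ℝ) ^ η *
              Real.logb 2 (Λ.card : ℝ))
            (Real.exp (Real.logb 2 (2 ^ 30 * M ^ 20) *
              Real.logb 2 ((p : ℝ) * Real.logb 2 M / Real.logb 2 (p : ℝ)) /
              Real.logb 2 ((2 : ℝ) ^ (-25 : ℤ) * η * p / M)))
        ≤ (Q.card : ℝ)) :
    ∃ (L L' : Finset (Fin n → ZMod 2)) (lam : Fin (d - 2) → (Fin n → ZMod 2)),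
      L ⊆ Λ ∧ L' ⊆ Λ ∧ (∀ i, lam i ∈ Λ) ∧
      L ∩ L' = ∅ ∧
      (∀ i, lam i ∉ L ∪ L') ∧
      Real.logb 2 ((Q.card : ℝ) * (d : ℝ) ^ d /
          (2 ^ (140 + 80 * d) * K ^ (3 * d) * (Λ.card : ℝ) ^ (d - 1))) /
        (2 ^ 10 * Real.logb 2 (2 ^ 40 * 8 ^ d * K ^ d)) ≤ (L.card : ℝ) ∧
      (1 / (2 ^ 10 * (p : ℝ) ^ 2)) *
        ((Q.card : ℝ) * (d : ℝ) ^ d /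
          (2 ^ (140 + 80 * d) * K ^ (3 * d) * (Λ.card : ℝ) ^ (d - 1))) ^ η ≤
        (L'.card : ℝ) ∧
      ∀ x ∈ L, ∀ y ∈ L', (∑ i, lam i) + x + y ∈ Q := by
  have hN : (2 : ℝ) ≤ #Λ := mod_cast (show 2 ≤ 8 * d ^ 2 by nlinarith).trans hΛcard
  exact stmt17_general hK hη (by omega) hΛ hQ
    ((le_div_self (by positivity) hη0 (by linarith)).trans hpK) hT
    (pow_four_mul_le_div_of_mul_max_le hK hη0 hp (by omega) hN hpK hM hQcard)
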